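/- arXiv:1806.07953 — 6 statements merged into one kernel-verified Lean document; each statement's English description precedes it below -/
import Mathlib

section
/- Let α ≥ 1. There exists a constant C_α > 0 such that for all x, x′, y′, z′ ∈ ℝ, setting ζ = z′ − |x|^α y′ and ζ′ = z′ − y′ ∫₀¹ |x + s(x′ − x)|^α ds, one has min{ |ζ′|^{1/(α+1)}, |ζ′|^{1/2} / |x′|^{(α−1)/2} } ≤ C_α ( |x − x′| + |y′| + min{ |ζ|^{1/(α+1)}, |ζ|^{1/2} / |x|^{(α−1)/2} } ), where in each minimum the convention is that it equals the first entry |·|^{1/(α+1)} when the corresponding base point (x′ respectively x) is 0, and equals 0 when the corresponding ζ-quantity is 0. -/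
/-- The minimum appearing in the quasi-distance `δ`, with the conventions of the paper:
it equals `|ζ| ^ (1/(α+1))` when the base point is `0` (and it is `0` when `ζ = 0`). -/
noncomputable def ccMin (α x ζ : ℝ) : ℝ :=
  if x = 0 then |ζ| ^ (1 / (α + 1))
  else min (|ζ| ^ (1 / (α + 1))) (|ζ| ^ ((1 : ℝ) / 2) / |x| ^ ((α - 1) / 2))

/-!
The sublevel set `{ζ | ccMin α x ζ ≤ r}` is the interval `|ζ| ≤ r ^ 2 * max r |x| ^ (α - 1)`.
Take for `r` the sum `|x - x'| + |y'| + ccMin α x ζ`. Moving the base point by at most `r` changes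
the half-length of the interval by a bounded factor only, and replacing `|x| ^ α` by its mean over
the segment from `x` to `x'` moves `ζ` by at most a multiple of the same half-length, by the mean
value inequality. A bounded factor on the half-length costs a bounded factor on `r`.
-/

section RpowLipschitz

lemma abs_rpow_sub_rpow_le {p a b : ℝ} (hp : 1 ≤ p) (ha : 0 ≤ a) (hb : 0 ≤ b) :
    |a ^ p - b ^ p| ≤ p * max a b ^ (p - 1) * |a - b| := by
  refine (convex_Icc 0 (max a b)).norm_image_sub_le_of_norm_hasDerivWithin_le
    (f := fun t ↦ t ^ p) (f' := fun t ↦ p * t ^ (p - 1))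
    (fun t _ ↦ (Real.hasDerivAt_rpow_const (Or.inr hp)).hasDerivWithinAt) ?_
    ⟨hb, le_max_right a b⟩ ⟨ha, le_max_left a b⟩
  rintro t ⟨ht, htm⟩
  rw [Real.norm_of_nonneg (by positivity)]
  gcongr

variable {E : Type*} [SeminormedAddCommGroup E]

lemma abs_norm_rpow_sub_norm_rpow_le {p : ℝ} (hp : 1 ≤ p) (u v : E) :
    |‖u‖ ^ p - ‖v‖ ^ p| ≤ p * max ‖u‖ ‖v‖ ^ (p - 1) * ‖u - v‖ :=
  (abs_rpow_sub_rpow_le hp (norm_nonneg u) (norm_nonneg v)).trans <|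
    mul_le_mul_of_nonneg_left (abs_norm_sub_norm_le u v) (by positivity)

variable [NormedSpace ℝ E]

lemma norm_add_smul_sub_le_max (x y : E) {s : ℝ} (hs : s ∈ Set.Icc 0 1) :
    ‖x + s • (y - x)‖ ≤ max ‖x‖ ‖y‖ :=
  convexOn_univ_norm.le_max_of_mem_segment (Set.mem_univ x) (Set.mem_univ y) <|
    segment_eq_image' ℝ x y ▸ Set.mem_image_of_mem _ hs

lemma abs_integral_norm_rpow_sub_norm_rpow_le {p : ℝ} (hp : 1 ≤ p) (x y : E) :
    |(∫ s in (0 : ℝ)..1, ‖x + s • (y - x)‖ ^ p) - ‖x‖ ^ p| ≤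
      p * max ‖x‖ ‖y‖ ^ (p - 1) * ‖x - y‖ := by
  have hcont : Continuous fun s : ℝ ↦ ‖x + s • (y - x)‖ ^ p :=
    Continuous.rpow_const (by fun_prop) fun _ ↦ Or.inr (by linarith)
  have hdiff : (∫ s in (0 : ℝ)..1, ‖x + s • (y - x)‖ ^ p) - ‖x‖ ^ p =
      ∫ s in (0 : ℝ)..1, (‖x + s • (y - x)‖ ^ p - ‖x‖ ^ p) := by
    rw [intervalIntegral.integral_sub (hcont.intervalIntegrable _ _) intervalIntegrable_const]
    simp
  have hpointwise : ∀ s ∈ Set.uIoc (0 : ℝ) 1, ‖‖x + s • (y - x)‖ ^ p - ‖x‖ ^ p‖ ≤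
      p * max ‖x‖ ‖y‖ ^ (p - 1) * ‖x - y‖ := by
    intro s hs
    rw [Set.uIoc_of_le zero_le_one] at hs
    have hmax : max ‖x + s • (y - x)‖ ‖x‖ ≤ max ‖x‖ ‖y‖ :=
      max_le (norm_add_smul_sub_le_max x y (Set.Ioc_subset_Icc_self hs)) (le_max_left _ _)
    have hdist : ‖x + s • (y - x) - x‖ ≤ ‖x - y‖ := by
      rw [add_sub_cancel_left, norm_smul_of_nonneg hs.1.le, norm_sub_rev y x]
      exact mul_le_of_le_one_left (norm_nonneg _) hs.2
    refine (abs_norm_rpow_sub_norm_rpow_le hp _ x).trans ?_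
    gcongr
  rw [hdiff]
  simpa using intervalIntegral.norm_integral_le_of_norm_le_const hpointwise

end RpowLipschitz

lemma rpow_one_div_add_one_le_iff {α a r : ℝ} (hα : -1 < α) (ha : 0 ≤ a) (hr : 0 ≤ r) :
    a ^ (1 / (α + 1)) ≤ r ↔ a ≤ r ^ 2 * r ^ (α - 1) := by
  have hsplit : r ^ (α + 1) = r ^ 2 * r ^ (α - 1) := by
    rw [← Real.rpow_two, ← Real.rpow_add' hr (by linarith)]
    ring_nf
  rw [one_div, Real.rpow_inv_le_iff_of_pos ha hr (by linarith), hsplit]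

lemma rpow_half_div_rpow_le_iff {a b r : ℝ} (β : ℝ) (ha : 0 ≤ a) (hb : 0 < b) (hr : 0 ≤ r) :
    a ^ ((1 : ℝ) / 2) / b ^ (β / 2) ≤ r ↔ a ≤ r ^ 2 * b ^ β := by
  rw [div_le_iff₀ (by positivity), one_div,
    Real.rpow_inv_le_iff_of_pos ha (by positivity) two_pos, Real.rpow_two, mul_pow,
    ← Real.rpow_mul_natCast hb.le, Nat.cast_ofNat, div_mul_cancel₀ β two_ne_zero]

lemma ccMin_nonneg (α x ζ : ℝ) : 0 ≤ ccMin α x ζ := by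
  unfold ccMin
  split_ifs <;> positivity

/-- The half-length of the interval `{ζ | ccMin α x ζ ≤ r}` for `1 ≤ α` and `0 ≤ r`, see
`ccMin_le_iff`: the extent in the `ζ`-direction of a ball of radius `r` for the quasi-distance `δ`
about a point with first coordinate `x`. -/
noncomputable def ccHeight (α x r : ℝ) : ℝ :=
  r ^ 2 * max r |x| ^ (α - 1)

lemma ccHeight_eq_max {α r : ℝ} (hα : 1 ≤ α) (x : ℝ) (hr : 0 ≤ r) :
    ccHeight α x r = max (r ^ 2 * r ^ (α - 1)) (r ^ 2 * |x| ^ (α - 1)) := by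
  rw [ccHeight, (Real.monotoneOn_rpow_Ici_of_exponent_nonneg (sub_nonneg.2 hα)).map_max hr
    (abs_nonneg x), mul_max_of_nonneg _ _ (sq_nonneg r)]

lemma ccMin_le_iff {α r : ℝ} (hα : 1 ≤ α) (x ζ : ℝ) (hr : 0 ≤ r) :
    ccMin α x ζ ≤ r ↔ |ζ| ≤ ccHeight α x r := by
  have hpow := rpow_one_div_add_one_le_iff (by linarith : -1 < α) (abs_nonneg ζ) hr
  rcases eq_or_ne x 0 with rfl | hx
  · rw [ccMin, if_pos rfl, hpow, ccHeight, abs_zero, max_eq_left hr]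
  · rw [ccMin, if_neg hx, min_le_iff, hpow,
      rpow_half_div_rpow_le_iff (α - 1) (abs_nonneg ζ) (abs_pos.2 hx) hr, ← le_max_iff,
      ccHeight_eq_max hα x hr]

lemma mul_ccHeight_le_ccHeight_mul {α C r : ℝ} (hα : 1 ≤ α) (hC : 1 ≤ C) (x : ℝ) (hr : 0 ≤ r) :
    C * ccHeight α x r ≤ ccHeight α x (C * r) := by
  have : 0 ≤ α - 1 := sub_nonneg.2 hα
  calc C * ccHeight α x r = C * r ^ 2 * max r |x| ^ (α - 1) := by rw [ccHeight, mul_assoc]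
    _ ≤ C ^ 2 * r ^ 2 * max (C * r) |x| ^ (α - 1) := by
      gcongr
      · exact le_self_pow₀ hC two_ne_zero
      · exact le_mul_of_one_le_left hr hC
    _ = ccHeight α x (C * r) := by rw [ccHeight, mul_pow]

lemma sq_mul_rpow_le_mul_ccHeight {α m r x : ℝ} (hα : 1 ≤ α) (hm : 0 ≤ m) (hmr : m ≤ r + |x|) :
    r ^ 2 * m ^ (α - 1) ≤ 2 ^ (α - 1) * ccHeight α x r := by
  have : 0 ≤ α - 1 := sub_nonneg.2 hα
  have hmax : m ≤ 2 * max r |x| := by linarith [le_max_left r |x|, le_max_right r |x|]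
  calc r ^ 2 * m ^ (α - 1) ≤ r ^ 2 * (2 * max r |x|) ^ (α - 1) := by gcongr
    _ = 2 ^ (α - 1) * ccHeight α x r := by
      rw [Real.mul_rpow two_pos.le (le_max_of_le_right (abs_nonneg x)), ccHeight]
      ring

lemma ccHeight_le_mul_ccHeight_of_abs_sub_le {α r x x' : ℝ} (hα : 1 ≤ α) (hx : |x - x'| ≤ r) :
    ccHeight α x r ≤ 2 ^ (α - 1) * ccHeight α x' r :=
  sq_mul_rpow_le_mul_ccHeight hα (le_max_of_le_right (abs_nonneg x)) <|
    max_le (by linarith [abs_nonneg x']) (by linarith [abs_sub_abs_le_abs_sub x x'])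

lemma abs_mul_integral_sub_rpow_le_mul_ccHeight {α r x x' y : ℝ} (hα : 1 ≤ α) (hx : |x - x'| ≤ r)
    (hy : |y| ≤ r) :
    |y * ((∫ s in (0 : ℝ)..1, |x + s * (x' - x)| ^ α) - |x| ^ α)| ≤
      α * 2 ^ (α - 1) * ccHeight α x' r := by
  have hr : 0 ≤ r := (abs_nonneg y).trans hy
  have hmax : max |x| |x'| ≤ r + |x'| :=
    max_le (by linarith [abs_sub_abs_le_abs_sub x x']) (by linarith)
  have hint : |(∫ s in (0 : ℝ)..1, |x + s * (x' - x)| ^ α) - |x| ^ α| ≤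
      α * max |x| |x'| ^ (α - 1) * |x - x'| :=
    abs_integral_norm_rpow_sub_norm_rpow_le hα x x'
  calc |y * ((∫ s in (0 : ℝ)..1, |x + s * (x' - x)| ^ α) - |x| ^ α)|
      ≤ r * (α * max |x| |x'| ^ (α - 1) * r) := by
        rw [abs_mul]
        gcongr
        exact hint.trans (by gcongr)
    _ = α * (r ^ 2 * max |x| |x'| ^ (α - 1)) := by ring
    _ ≤ α * (2 ^ (α - 1) * ccHeight α x' r) :=
        mul_le_mul_of_nonneg_left (sq_mul_rpow_le_mul_ccHeight hα (by positivity) hmax)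
          (by positivity)
    _ = α * 2 ^ (α - 1) * ccHeight α x' r := by ring

lemma abs_sub_mul_integral_le_mul_ccHeight {α r x x' y z : ℝ} (hα : 1 ≤ α) (hx : |x - x'| ≤ r)
    (hy : |y| ≤ r) (hz : |z - |x| ^ α * y| ≤ ccHeight α x r) :
    |z - y * ∫ s in (0 : ℝ)..1, |x + s * (x' - x)| ^ α| ≤
      (1 + α) * 2 ^ (α - 1) * ccHeight α x' r := by
  set I := ∫ s in (0 : ℝ)..1, |x + s * (x' - x)| ^ α
  calc |z - y * I| = |(z - |x| ^ α * y) - y * (I - |x| ^ α)| := by ring_nf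
    _ ≤ |z - |x| ^ α * y| + |y * (I - |x| ^ α)| := abs_sub _ _
    _ ≤ 2 ^ (α - 1) * ccHeight α x' r + α * 2 ^ (α - 1) * ccHeight α x' r :=
        add_le_add (hz.trans (ccHeight_le_mul_ccHeight_of_abs_sub_le hα hx))
          (abs_mul_integral_sub_rpow_le_mul_ccHeight hα hx hy)
    _ = (1 + α) * 2 ^ (α - 1) * ccHeight α x' r := by ring

/-- The key algebraic inequality (2.9) comparing the `ζ`-part of the quasi-distance at
`x'` with the one at `x`. -/
theorem ccMin_comparison (α : ℝ) (hα : 1 ≤ α) :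
    ∃ C : ℝ, 0 < C ∧ ∀ x x' y' z' : ℝ,
      ccMin α x' (z' - y' * ∫ s in (0:ℝ)..1, |x + s * (x' - x)| ^ α) ≤
        C * (|x - x'| + |y'| + ccMin α x (z' - |x| ^ α * y')) := by
  have hC : 1 ≤ (1 + α) * 2 ^ (α - 1) :=
    one_le_mul_of_one_le_of_one_le (by linarith)
      (Real.one_le_rpow one_le_two (sub_nonneg.2 hα))
  refine ⟨(1 + α) * 2 ^ (α - 1), by positivity, fun x x' y' z' ↦ ?_⟩
  have hx := abs_nonneg (x - x')
  have hy := abs_nonneg y'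
  have hζ := ccMin_nonneg α x (z' - |x| ^ α * y')
  set r := |x - x'| + |y'| + ccMin α x (z' - |x| ^ α * y')
  have hr : 0 ≤ r := by positivity
  have hheight : |z' - |x| ^ α * y'| ≤ ccHeight α x r :=
    (ccMin_le_iff hα x _ hr).1 (by linarith)
  exact (ccMin_le_iff hα x' _ (by positivity)).2 <|
    (abs_sub_mul_integral_le_mul_ccHeight hα (by linarith) (by linarith) hheight).trans
      (mul_ccHeight_le_ccHeight_mul hα hC x' hr)
end

section
/- Let α ≥ 1 and let d be the Carnot–Carathéodory distance on ℝ³ induced by X₁ and X₂. There exists a constant C_α > 0 such that for every point p = (x̄, ȳ, 0) in the plane Σ = {z = 0} and every r > 0 one has C_α⁻¹ · ℒ³(B(p,r))/r ≤ μ(B(p,r) ∩ Σ) ≤ C_α · ℒ³(B(p,r))/r, where ℒ³ is Lebesgue measure on ℝ³ and μ(B(p,r) ∩ Σ) denotes the μ-measure of {(x,y) ∈ ℝ² : (x,y,0) ∈ B(p,r)}. -/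
open MeasureTheory

/-- A horizontal curve on `[0,T]` for the vector fields `X₁ = ∂ₓ`, `X₂ = ∂_y + |x|^α ∂_z`:
a Lipschitz curve whose components have a.e. derivatives `(h₁, h₂, |x|^α h₂)` with
`h₁² + h₂² ≤ 1`. -/
def IsHorizontal (α T : ℝ) (γ : ℝ → ℝ × ℝ × ℝ) : Prop :=
  (∃ K, LipschitzOnWith K γ (Set.Icc 0 T)) ∧
  ∃ h₁ h₂ : ℝ → ℝ, Measurable h₁ ∧ Measurable h₂ ∧
    (∀ t, (h₁ t) ^ 2 + (h₂ t) ^ 2 ≤ 1) ∧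
    ∀ᵐ t ∂(volume.restrict (Set.Ioo 0 T)),
      HasDerivAt (fun s => (γ s).1) (h₁ t) t ∧
      HasDerivAt (fun s => (γ s).2.1) (h₂ t) t ∧
      HasDerivAt (fun s => (γ s).2.2) (|(γ t).1| ^ α * h₂ t) t

/-- The Carnot–Carathéodory distance associated with `X₁, X₂`. -/
noncomputable def ccDist (α : ℝ) (p q : ℝ × ℝ × ℝ) : ℝ :=
  sInf {T : ℝ | 0 < T ∧ ∃ γ : ℝ → ℝ × ℝ × ℝ, IsHorizontal α T γ ∧ γ 0 = p ∧ γ T = q}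

/-- The Carnot–Carathéodory ball. -/
def ccBall (α : ℝ) (p : ℝ × ℝ × ℝ) (r : ℝ) : Set (ℝ × ℝ × ℝ) :=
  {q | ccDist α p q < r}

/-- The algebraic quasi-distance `δ`. -/
noncomputable def deltaDist (α : ℝ) (p q : ℝ × ℝ × ℝ) : ℝ :=
  |q.1 - p.1| + |q.2.1 - p.2.1| +
    ccMin α p.1 (p.2.2 - q.2.2 + |p.1| ^ α * (q.2.1 - p.2.1))

/-- The perimeter measure `μ = |x|^α ℒ²` on the plane `z = 0`, identified with `ℝ²`. -/
noncomputable def planeMeasure (α : ℝ) : Measure (ℝ × ℝ) :=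
  volume.withDensity (fun u => ENNReal.ofReal (|u.1| ^ α))

/-!
Let `x₀` be the abscissa of `p` and put `V = r² (|x₀| + r) ^ (α - 1)`. The ball `B(p, r)` lies
between two boxes of sides `r`, `r` and `V`, up to constants, both sheared along the plane spanned
by `X₁` and `X₂` at `p`. The outer box comes from integrating
`dz - |x₀| ^ α dy = (|x| ^ α - |x₀| ^ α) h₂ dt` along a horizontal curve, where `|x - x₀| ≤ r`. For
the inner one, a commutator loop of sides at most `r / 8` that moves away from `x = 0` realises any
vertical displacement up to a constant times `V`. Hence `ℒ³(B(p, r)) / r` is comparable to `r V`.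
So is the `μ`-measure of the section: where `|x₀| ≥ r` the shear confines `y` to an interval of
length comparable to `V / |x₀| ^ α`, and where `|x₀| ≤ r` the section is comparable to a square of
side `r` on most of which `|x| ^ α` is comparable to `r ^ α`.
-/

section PowerEstimates

variable {α : ℝ}

theorem one_sub_rpow_le {w : ℝ} (hw₀ : 0 ≤ w) (hw₁ : w ≤ 1) :
    1 - w ^ α ≤ max 1 α * (1 - w) := by
  rcases le_total α 1 with h | h
  · rw [max_eq_left h]
    linarith [Real.self_le_rpow_of_le_one hw₀ hw₁ h]
  · have bernoulli := one_add_mul_self_le_rpow_one_add (s := w - 1) (by linarith) h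
    rw [add_sub_cancel] at bernoulli
    rw [max_eq_right h]
    linarith

theorem min_mul_one_sub_le_one_sub_rpow (hα : 0 ≤ α) {w : ℝ} (hw₀ : 0 ≤ w) (hw₁ : w ≤ 1) :
    min 1 α * (1 - w) ≤ 1 - w ^ α := by
  rcases le_total α 1 with h | h
  · have bernoulli := rpow_one_add_le_one_add_mul_self (s := w - 1) (by linarith) hα h
    rw [add_sub_cancel] at bernoulli
    rw [min_eq_right h]
    linarith
  · rw [min_eq_left h]
    linarith [Real.rpow_le_self_of_le_one hw₀ hw₁ h]

theorem rpow_sub_rpow_eq_mul_one_sub_rpow {u v : ℝ} (hu : 0 ≤ u) (hv : 0 < v) :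
    v ^ α - u ^ α = v ^ α * (1 - (u / v) ^ α) := by
  have : 0 < v ^ α := Real.rpow_pos_of_pos hv α
  rw [Real.div_rpow hu hv.le]
  field_simp

theorem sub_mul_rpow_sub_one_eq (u : ℝ) {v : ℝ} (hv : 0 < v) :
    (v - u) * v ^ (α - 1) = v ^ α * (1 - u / v) := by
  rw [Real.rpow_sub_one hv.ne']
  field_simp

theorem rpow_sub_rpow_le {u v : ℝ} (hu : 0 ≤ u) (huv : u ≤ v) (hv : 0 < v) :
    v ^ α - u ^ α ≤ max 1 α * ((v - u) * v ^ (α - 1)) := by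
  rw [rpow_sub_rpow_eq_mul_one_sub_rpow hu hv, sub_mul_rpow_sub_one_eq u hv, mul_left_comm]
  gcongr
  exact one_sub_rpow_le (by positivity) (div_le_one_of_le₀ huv hv.le)

theorem le_rpow_sub_rpow (hα : 0 ≤ α) {u v : ℝ} (hu : 0 ≤ u) (huv : u ≤ v) (hv : 0 < v) :
    min 1 α * ((v - u) * v ^ (α - 1)) ≤ v ^ α - u ^ α := by
  rw [rpow_sub_rpow_eq_mul_one_sub_rpow hu hv, sub_mul_rpow_sub_one_eq u hv, mul_left_comm]
  gcongr
  exact min_mul_one_sub_le_one_sub_rpow hα (by positivity) (div_le_one_of_le₀ huv hv.le)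

theorem mul_rpow_sub_one_le_rpow_sub_one (hα : 0 ≤ α) {c m M : ℝ} (hc : 0 ≤ c) (hm : 0 < m)
    (hmM : m ≤ M) (hMm : c * M ≤ m) : c * m ^ (α - 1) ≤ M ^ (α - 1) := by
  have hM := hm.trans_le hmM
  rw [Real.rpow_sub_one hm.ne', Real.rpow_sub_one hM.ne', mul_div_assoc', div_le_div_iff₀ hm hM]
  calc c * m ^ α * M = m ^ α * (c * M) := by ring
    _ ≤ M ^ α * m := by gcongr

theorem mul_add_rpow_sub_one_mono (hα : 0 ≤ α) {a s t : ℝ} (ha : 0 ≤ a) (hs : 0 ≤ s)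
    (hst : s ≤ t) : s * (a + s) ^ (α - 1) ≤ t * (a + t) ^ (α - 1) := by
  rcases hs.eq_or_lt with rfl | hs
  · rw [zero_mul]
    positivity
  · have factor (u : ℝ) (hu : 0 < u) :
        u * (a + u) ^ (α - 1) = (a + u) ^ α * (u / (a + u)) := by
      rw [Real.rpow_sub_one (by positivity)]
      ring
    have ht := hs.trans_le hst
    rw [factor s hs, factor t ht]
    have : s / (a + s) ≤ t / (a + t) := by
      rw [div_le_div_iff₀ (by positivity) (by positivity)]
      nlinarith
    gcongr

theorem abs_rpow_sub_rpow_le_mul_max (hα : 0 ≤ α) {u v : ℝ} (hu : 0 ≤ u) (hv : 0 ≤ v) :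
    |u ^ α - v ^ α| ≤ max 1 α * (|u - v| * max u v ^ (α - 1)) := by
  wlog huv : u ≤ v generalizing u v
  · rw [abs_sub_comm, abs_sub_comm u, max_comm u]
    exact this hv hu (le_of_not_ge huv)
  rcases huv.eq_or_lt with rfl | hlt
  · simp
  · have hpow : u ^ α ≤ v ^ α := by gcongr
    rw [max_eq_right huv, abs_sub_comm, abs_of_nonneg (sub_nonneg.2 hpow), abs_sub_comm,
      abs_of_nonneg (sub_nonneg.2 huv)]
    exact rpow_sub_rpow_le hu huv (hu.trans_lt hlt)

theorem abs_rpow_sub_rpow_le_s10 (hα : 0 ≤ α) {u v : ℝ} (hu : 0 ≤ u) (hv : 0 ≤ v) :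
    |u ^ α - v ^ α| ≤ 2 * max 1 α * (|u - v| * (v + |u - v|) ^ (α - 1)) := by
  rcases eq_or_ne u v with rfl | hne
  · simp
  have hmax : 0 < max u v := by
    rcases hne.lt_or_gt with h | h
    · exact lt_max_of_lt_right (hu.trans_lt h)
    · exact lt_max_of_lt_left (hv.trans_lt h)
  have hsub : max u v - min u v = |u - v| := max_sub_min_eq_abs' u v
  have hle : max u v ≤ v + |u - v| := by linarith [min_le_right u v]
  have hge : 1 / 2 * (v + |u - v|) ≤ max u v := by
    linarith [le_max_right u v, le_min hu hv]
  calc |u ^ α - v ^ α| ≤ max 1 α * (|u - v| * max u v ^ (α - 1)) :=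
        abs_rpow_sub_rpow_le_mul_max hα hu hv
    _ = 2 * max 1 α * (|u - v| * (1 / 2 * max u v ^ (α - 1))) := by ring
    _ ≤ _ := by
      gcongr
      exact mul_rpow_sub_one_le_rpow_sub_one hα (by norm_num) hmax hle hge

theorem abs_abs_rpow_sub_abs_rpow_le (hα : 0 ≤ α) {x y t : ℝ} (hxy : |x - y| ≤ t) :
    |(|x| ^ α - |y| ^ α)| ≤ 2 * max 1 α * (t * (|y| + t) ^ (α - 1)) := by
  refine (abs_rpow_sub_rpow_le_s10 hα (abs_nonneg x) (abs_nonneg y)).trans ?_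
  gcongr 2 * max 1 α * ?_
  exact mul_add_rpow_sub_one_mono hα (abs_nonneg y) (abs_nonneg _)
    ((abs_abs_sub_abs_le x y).trans hxy)

end PowerEstimates

theorem exists_abs_sub_eq_and_abs_eq_add (x : ℝ) {h : ℝ} (hh : 0 ≤ h) :
    ∃ w : ℝ, |w - x| = h ∧ |w| = |x| + h := by
  rcases le_total 0 x with hx | hx
  · exact ⟨x + h, by simp [abs_of_nonneg hh], by simp [abs_of_nonneg, hx, hh, add_nonneg]⟩
  · refine ⟨x - h, by simp [abs_of_nonneg hh], ?_⟩
    rw [abs_of_nonpos hx, abs_of_nonpos (by linarith)]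
    ring

theorem lipschitzOnWith_Icc_trans {X : Type*} [PseudoMetricSpace X] {f : ℝ → X} {K L : NNReal}
    {a b c : ℝ} (hab : a ≤ b) (hbc : b ≤ c) (hK : LipschitzOnWith K f (Set.Icc a b))
    (hL : LipschitzOnWith L f (Set.Icc b c)) : LipschitzOnWith (max K L) f (Set.Icc a c) := by
  replace hK := hK.weaken (le_max_left K L)
  replace hL := hL.weaken (le_max_right K L)
  refine LipschitzOnWith.of_dist_le_mul fun s hs t ht => ?_
  wlog hst : s ≤ t generalizing s t
  · rw [dist_comm (f s), dist_comm s]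
    exact this t ht s hs (le_of_not_ge hst)
  rcases le_total t b with htb | hbt
  · exact hK.dist_le_mul s ⟨hs.1, hst.trans htb⟩ t ⟨ht.1, htb⟩
  rcases le_total b s with hbs | hsb
  · exact hL.dist_le_mul s ⟨hbs, hs.2⟩ t ⟨hbt, ht.2⟩
  calc dist (f s) (f t) ≤ dist (f s) (f b) + dist (f b) (f t) := dist_triangle _ _ _
    _ ≤ (max K L : NNReal) * dist s b + (max K L : NNReal) * dist b t :=
      add_le_add (hK.dist_le_mul s ⟨hs.1, hsb⟩ b ⟨hab, le_rfl⟩)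
        (hL.dist_le_mul b ⟨le_rfl, hbc⟩ t ⟨hbt, ht.2⟩)
    _ = (max K L : NNReal) * dist s t := by
      rw [← mul_add, dist_add_dist_of_mem_segment (segment_eq_Icc hst ▸ ⟨hsb, hbt⟩)]

theorem abs_sub_le_of_ae_norm_deriv_le {f : ℝ → ℝ} {a b C : ℝ} (hab : a ≤ b)
    (hf : AbsolutelyContinuousOnInterval f a b)
    (hC : ∀ᵐ t ∂volume.restrict (Set.Ioo a b), ‖deriv f t‖ ≤ C) :
    |f b - f a| ≤ C * (b - a) := by
  rw [Measure.restrict_congr_set Ioo_ae_eq_Ioc, ae_restrict_iff' measurableSet_Ioc] at hC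
  rw [← Set.uIoc_of_le hab] at hC
  rw [← hf.integral_deriv_eq_sub, ← abs_of_nonneg (sub_nonneg.2 hab)]
  exact intervalIntegral.norm_integral_le_of_norm_le_const_ae hC

/-- `γ` is differentiable at `t` with velocity `u X₁ + v X₂`, in coordinates. -/
def HasHorizontalDerivAt (α : ℝ) (γ : ℝ → ℝ × ℝ × ℝ) (u v t : ℝ) : Prop :=
  HasDerivAt (fun s => (γ s).1) u t ∧ HasDerivAt (fun s => (γ s).2.1) v t ∧
    HasDerivAt (fun s => (γ s).2.2) (|(γ t).1| ^ α * v) t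

/-- The deviation of `q` from the plane spanned by `X₁` and `X₂` at `p`, measured along the
`z`-axis; up to sign it is the argument of `ccMin` in `deltaDist`. -/
noncomputable def verticalOffset (α : ℝ) (p q : ℝ × ℝ × ℝ) : ℝ :=
  q.2.2 - p.2.2 - |p.1| ^ α * (q.2.1 - p.2.1)

/-- The order of magnitude of the vertical half-height of a Carnot–Carathéodory ball of radius `r`
centred at abscissa `x`. -/
noncomputable def verticalSize (α x r : ℝ) : ℝ :=
  r ^ 2 * (|x| + r) ^ (α - 1)

section VerticalSize

variable {α x r : ℝ}

theorem verticalSize_pos (hr : 0 < r) : 0 < verticalSize α x r := by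
  unfold verticalSize
  positivity

theorem verticalSize_eq_mul_rpow (hr : 0 < r) :
    verticalSize α x r = r ^ 2 / (|x| + r) * (|x| + r) ^ α := by
  rw [verticalSize, Real.rpow_sub_one (by positivity)]
  ring

theorem verticalSize_strictMonoOn (hα : 0 ≤ α) : StrictMonoOn (verticalSize α x) (Set.Ici 0) := by
  intro s hs r _ hsr
  have hr : 0 < r := hs.trans_lt hsr
  have hs : 0 ≤ s := hs
  calc verticalSize α x s = s * (s * (|x| + s) ^ (α - 1)) := by rw [verticalSize]; ring
    _ ≤ s * (r * (|x| + r) ^ (α - 1)) := by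
      gcongr s * ?_
      exact mul_add_rpow_sub_one_mono hα (abs_nonneg x) hs hsr.le
    _ < r * (r * (|x| + r) ^ (α - 1)) := by gcongr
    _ = verticalSize α x r := by rw [verticalSize]; ring

end VerticalSize

namespace HasHorizontalDerivAt

variable {α u v t : ℝ} {γ γ' : ℝ → ℝ × ℝ × ℝ}

theorem congr_of_eventuallyEq (h : HasHorizontalDerivAt α γ u v t) (hγ : γ' =ᶠ[nhds t] γ) :
    HasHorizontalDerivAt α γ' u v t := by
  obtain ⟨hx, hy, hz⟩ := h
  refine ⟨hx.congr_of_eventuallyEq (hγ.fun_comp Prod.fst),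
    hy.congr_of_eventuallyEq (hγ.fun_comp fun q => q.2.1), ?_⟩
  rw [hγ.eq_of_nhds]
  exact hz.congr_of_eventuallyEq (hγ.fun_comp fun q => q.2.2)

theorem comp_sub_const {a : ℝ} (h : HasHorizontalDerivAt α γ u v (t - a)) :
    HasHorizontalDerivAt α (fun s => γ (s - a)) u v t :=
  ⟨h.1.comp_sub_const t a, h.2.1.comp_sub_const t a, h.2.2.comp_sub_const t a⟩

end HasHorizontalDerivAt

namespace IsHorizontal

variable {α S T : ℝ} {γ γ' : ℝ → ℝ × ℝ × ℝ}

theorem absolutelyContinuousOnInterval (hγ : IsHorizontal α T γ) {s : ℝ} (hs : s ∈ Set.Icc 0 T)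
    {π : ℝ × ℝ × ℝ → ℝ} {L : NNReal} (hπ : LipschitzWith L π) :
    AbsolutelyContinuousOnInterval (fun t => π (γ t)) 0 s := by
  obtain ⟨⟨K, hK⟩, -⟩ := hγ
  refine LipschitzOnWith.absolutelyContinuousOnInterval (K := L * K) ?_
  rw [Set.uIcc_of_le hs.1]
  exact hπ.comp_lipschitzOnWith (hK.mono (Set.Icc_subset_Icc_right hs.2))

theorem ae_hasHorizontalDerivAt (hγ : IsHorizontal α T γ) {s : ℝ} (hs : s ≤ T) :
    ∀ᵐ t ∂volume.restrict (Set.Ioo 0 s), ∃ u v, |u| ≤ 1 ∧ |v| ≤ 1 ∧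
      HasHorizontalDerivAt α γ u v t := by
  obtain ⟨-, h₁, h₂, -, -, hnorm, hderiv⟩ := hγ
  filter_upwards [ae_restrict_of_ae_restrict_of_subset (Set.Ioo_subset_Ioo_right hs) hderiv]
    with t ht
  exact ⟨h₁ t, h₂ t, by nlinarith [hnorm t, sq_abs (h₁ t), sq_nonneg (h₂ t)],
    by nlinarith [hnorm t, sq_abs (h₂ t), sq_nonneg (h₁ t)], ht⟩

theorem abs_fst_sub_le (hγ : IsHorizontal α T γ) {s : ℝ} (hs : s ∈ Set.Icc 0 T) :
    |(γ s).1 - (γ 0).1| ≤ s := by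
  have hderiv : ∀ᵐ t ∂volume.restrict (Set.Ioo 0 s), |deriv (fun t => (γ t).1) t| ≤ 1 := by
    filter_upwards [hγ.ae_hasHorizontalDerivAt hs.2] with t ⟨u, _, hu, _, hx, _⟩
    rwa [hx.deriv]
  simpa using abs_sub_le_of_ae_norm_deriv_le hs.1
    (hγ.absolutelyContinuousOnInterval hs LipschitzWith.prod_fst) hderiv

theorem abs_snd_fst_sub_le (hγ : IsHorizontal α T γ) (hT : 0 ≤ T) :
    |(γ T).2.1 - (γ 0).2.1| ≤ T := by
  have hderiv : ∀ᵐ t ∂volume.restrict (Set.Ioo 0 T), |deriv (fun t => (γ t).2.1) t| ≤ 1 := by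
    filter_upwards [hγ.ae_hasHorizontalDerivAt le_rfl] with t ⟨_, v, _, hv, _, hy, _⟩
    rwa [hy.deriv]
  simpa using abs_sub_le_of_ae_norm_deriv_le hT
    (hγ.absolutelyContinuousOnInterval (Set.right_mem_Icc.2 hT)
      (LipschitzWith.prod_fst.comp LipschitzWith.prod_snd)) hderiv

-- Along `γ` the offset from `γ 0` has derivative `(|x|^α - |x₀|^α) h₂`, and `|x - x₀| ≤ T`.
theorem abs_verticalOffset_le (hα : 0 ≤ α) (hγ : IsHorizontal α T γ) (hT : 0 ≤ T) :
    |verticalOffset α (γ 0) (γ T)| ≤ 2 * max 1 α * verticalSize α (γ 0).1 T := by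
  have hTmem : T ∈ Set.Icc 0 T := Set.right_mem_Icc.2 hT
  have hderiv : ∀ᵐ t ∂volume.restrict (Set.Ioo 0 T),
      |deriv (fun t => (γ t).2.2 - |(γ 0).1| ^ α * (γ t).2.1) t| ≤
        2 * max 1 α * (T * (|(γ 0).1| + T) ^ (α - 1)) := by
    filter_upwards [hγ.ae_hasHorizontalDerivAt le_rfl, ae_restrict_mem measurableSet_Ioo]
      with t ⟨_, v, _, hv, _, hy, hz⟩ ht
    rw [(hz.fun_sub (hy.const_mul _)).deriv, ← sub_mul, abs_mul]
    have hx : |(γ t).1 - (γ 0).1| ≤ T := (hγ.abs_fst_sub_le ⟨ht.1.le, ht.2.le⟩).trans ht.2.le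
    exact (mul_le_of_le_one_right (abs_nonneg _) hv).trans (abs_abs_rpow_sub_abs_rpow_le hα hx)
  have hac := (hγ.absolutelyContinuousOnInterval hTmem
    (LipschitzWith.prod_snd.comp LipschitzWith.prod_snd)).fun_sub
      ((hγ.absolutelyContinuousOnInterval hTmem
        (LipschitzWith.prod_fst.comp LipschitzWith.prod_snd)).const_mul (|(γ 0).1| ^ α))
  calc |verticalOffset α (γ 0) (γ T)|
      = |(γ T).2.2 - |(γ 0).1| ^ α * (γ T).2.1 - ((γ 0).2.2 - |(γ 0).1| ^ α * (γ 0).2.1)| := by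
        rw [verticalOffset]; ring_nf
    _ ≤ 2 * max 1 α * (T * (|(γ 0).1| + T) ^ (α - 1)) * (T - 0) :=
        abs_sub_le_of_ae_norm_deriv_le hT hac hderiv
    _ = 2 * max 1 α * verticalSize α (γ 0).1 T := by rw [verticalSize]; ring

theorem glue {g : ℝ → ℝ × ℝ × ℝ} (hS : 0 ≤ S) (hT : 0 ≤ T) (hγ : IsHorizontal α S γ)
    (hγ' : IsHorizontal α T γ') (hleft : Set.EqOn g γ (Set.Iic S))
    (hright : Set.EqOn g (fun t => γ' (t - S)) (Set.Ici S)) : IsHorizontal α (S + T) g := by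
  obtain ⟨⟨K, hK⟩, h₁, h₂, hm₁, hm₂, hnorm, hderiv⟩ := hγ
  obtain ⟨⟨K', hK'⟩, h₁', h₂', hm₁', hm₂', hnorm', hderiv'⟩ := hγ'
  refine ⟨⟨max K K', ?_⟩, fun t => if t ≤ S then h₁ t else h₁' (t - S),
    fun t => if t ≤ S then h₂ t else h₂' (t - S),
    hm₁.ite measurableSet_Iic (hm₁'.comp (measurable_id.sub_const S)),
    hm₂.ite measurableSet_Iic (hm₂'.comp (measurable_id.sub_const S)), fun t => ?_, ?_⟩
  · refine lipschitzOnWith_Icc_trans hS (le_add_of_nonneg_right hT) (fun s hs t ht => ?_)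
      fun s hs t ht => ?_
    · rw [hleft hs.2, hleft ht.2]
      exact hK hs ht
    · rw [hright hs.1, hright ht.1, ← edist_sub_right s t S]
      exact hK' ⟨by linarith [hs.1], by linarith [hs.2]⟩ ⟨by linarith [ht.1], by linarith [ht.2]⟩
  · by_cases ht : t ≤ S
    · simpa only [ht, if_true] using hnorm t
    · simpa only [ht, if_false] using hnorm' (t - S)
  · rw [ae_restrict_iff' measurableSet_Ioo] at hderiv hderiv' ⊢
    have hshift := (measurePreserving_sub_right volume S).quasiMeasurePreserving.ae hderiv'
    filter_upwards [hderiv, hshift, Measure.ae_ne volume S] with t ht ht' hne htmem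
    rcases hne.lt_or_gt with hlt | hgt
    · simp only [hlt.le, if_true]
      have hvel : HasHorizontalDerivAt α γ (h₁ t) (h₂ t) t := ht ⟨htmem.1, hlt⟩
      exact hvel.congr_of_eventuallyEq (hleft.eventuallyEq_of_mem (Iic_mem_nhds hlt))
    · simp only [hgt.not_ge, if_false]
      have hvel : HasHorizontalDerivAt α γ' (h₁' (t - S)) (h₂' (t - S)) (t - S) :=
        ht' ⟨by linarith, by linarith [htmem.2]⟩
      exact hvel.comp_sub_const.congr_of_eventuallyEq
        (hright.eventuallyEq_of_mem (Ici_mem_nhds hgt))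

theorem line {a b : ℝ} (hab : a ^ 2 + b ^ 2 ≤ 1) (hzero : a = 0 ∨ b = 0) (p : ℝ × ℝ × ℝ) :
    IsHorizontal α T fun t => (p.1 + a * t, p.2.1 + b * t, p.2.2 + |p.1| ^ α * b * t) := by
  have hderiv (c v t : ℝ) : HasDerivAt (fun s => c + v * s) v t := by
    simpa using ((hasDerivAt_id t).const_mul v).const_add c
  have hlip (c v : ℝ) : LipschitzWith ‖v‖₊ fun s : ℝ => c + v * s :=
    lipschitzWith_of_nnnorm_deriv_le (fun t => (hderiv c v t).differentiableAt)
      fun t => by rw [(hderiv c v t).deriv]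
  refine ⟨⟨_, ((hlip _ _).prodMk ((hlip _ _).prodMk (hlip _ _))).lipschitzOnWith⟩, fun _ => a,
    fun _ => b, measurable_const, measurable_const, fun _ => hab,
    Filter.Eventually.of_forall fun t => ⟨hderiv _ _ t, hderiv _ _ t, ?_⟩⟩
  rcases hzero with rfl | rfl
  · simpa using hderiv p.2.2 (|p.1| ^ α * b) t
  · simpa using hderiv p.2.2 0 t

end IsHorizontal

/-- `q` is the endpoint of a horizontal curve that starts at `p` and takes time exactly `T ≥ 0`.
Unlike in `ccDist`, time `0` is allowed. -/
def ReachableIn (α T : ℝ) (p q : ℝ × ℝ × ℝ) : Prop :=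
  0 ≤ T ∧ ∃ γ : ℝ → ℝ × ℝ × ℝ, IsHorizontal α T γ ∧ γ 0 = p ∧ γ T = q

namespace ReachableIn

variable {α S T : ℝ} {p q w : ℝ × ℝ × ℝ}

theorem trans (hpq : ReachableIn α S p q) (hqw : ReachableIn α T q w) :
    ReachableIn α (S + T) p w := by
  obtain ⟨hS, γ, hγ, hγ₀, hγS⟩ := hpq
  obtain ⟨hT, γ', hγ', hγ'₀, hγ'T⟩ := hqw
  have hleft : Set.EqOn (fun t => if t ≤ S then γ t else γ' (t - S)) γ (Set.Iic S) :=
    fun t ht => if_pos ht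
  have hright : Set.EqOn (fun t => if t ≤ S then γ t else γ' (t - S)) (fun t => γ' (t - S))
      (Set.Ici S) := by
    intro t ht
    rcases (Set.mem_Ici.1 ht).eq_or_lt with rfl | hlt
    · simp [hγS, hγ'₀]
    · exact if_neg hlt.not_ge
  refine ⟨add_nonneg hS hT, _, hγ.glue hS hT hγ' hleft hright, ?_, ?_⟩
  · exact (hleft (Set.mem_Iic.2 hS)).trans hγ₀
  · exact (hright (Set.mem_Ici.2 (le_add_of_nonneg_right hT))).trans (by simp [hγ'T])

theorem line {a b : ℝ} (hT : 0 ≤ T) (hab : a ^ 2 + b ^ 2 ≤ 1) (hzero : a = 0 ∨ b = 0)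
    (p : ℝ × ℝ × ℝ) :
    ReachableIn α T p (p.1 + a * T, p.2.1 + b * T, p.2.2 + |p.1| ^ α * b * T) :=
  ⟨hT, _, IsHorizontal.line hab hzero p, by simp, rfl⟩

theorem flow_X₁ (s x y z : ℝ) : ReachableIn α |s| (x, y, z) (x + s, y, z) := by
  have hsign : (SignType.sign s : ℝ) ^ 2 + 0 ^ 2 ≤ 1 := by
    rcases lt_trichotomy s 0 with h | h | h <;> simp [h]
  simpa using line (α := α) (abs_nonneg s) hsign (Or.inr rfl) (x, y, z)

theorem flow_X₂ (s x y z : ℝ) :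
    ReachableIn α |s| (x, y, z) (x, y + s, z + |x| ^ α * s) := by
  have hsign : 0 ^ 2 + (SignType.sign s : ℝ) ^ 2 ≤ 1 := by
    rcases lt_trichotomy s 0 with h | h | h <;> simp [h]
  simpa [mul_assoc] using line (α := α) (abs_nonneg s) hsign (Or.inl rfl) (x, y, z)

-- The loop `X₁, X₂, -X₁, -X₂` of sides `h` and `η`, run away from `x = 0`, encloses the vertical
-- displacement `((|x| + h) ^ α - |x| ^ α) * η`; two more segments adjust `y` and `x`.
theorem of_commutator_loop {h η : ℝ} (hh : 0 ≤ h)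
    (hη : ((|p.1| + h) ^ α - |p.1| ^ α) * η = verticalOffset α p q) :
    ReachableIn α (2 * h + 2 * |η| + |q.2.1 - p.2.1| + |q.1 - p.1|) p q := by
  obtain ⟨x, y, z⟩ := p
  obtain ⟨x', y', z'⟩ := q
  obtain ⟨w, hwx, hw⟩ := exists_abs_sub_eq_and_abs_eq_add x hh
  simp only [verticalOffset] at hη
  have out := flow_X₁ (α := α) (w - x) x y z
  rw [add_sub_cancel, hwx] at out
  have up := flow_X₂ (α := α) η w y z
  have back := flow_X₁ (α := α) (x - w) w (y + η) (z + |w| ^ α * η)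
  rw [add_sub_cancel, abs_sub_comm, hwx] at back
  have down := flow_X₂ (α := α) (-η) x (y + η) (z + |w| ^ α * η)
  have adjust_y := flow_X₂ (α := α) (y' - y) x (y + η + -η)
    (z + |w| ^ α * η + |x| ^ α * -η)
  have adjust_x := flow_X₁ (α := α) (x' - x) x (y + η + -η + (y' - y))
    (z + |w| ^ α * η + |x| ^ α * -η + |x| ^ α * (y' - y))
  convert ((((out.trans up).trans back).trans down).trans adjust_y).trans adjust_x using 1
  · rw [abs_neg]
    ring
  · rw [hw]
    refine Prod.ext (by simp) (Prod.ext (by simp) ?_)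
    linarith

theorem ccDist_le (hpq : ReachableIn α T p q) (hT : 0 < T) : ccDist α p q ≤ T :=
  csInf_le ⟨0, fun _ ht => ht.1.le⟩ ⟨hT, hpq.2⟩

end ReachableIn

theorem exists_pos_reachableIn {α : ℝ} (hα : 0 < α) (p q : ℝ × ℝ × ℝ) :
    ∃ T, 0 < T ∧ ReachableIn α T p q := by
  have hpow : |p.1| ^ α < (|p.1| + 1) ^ α := by
    gcongr
    exact lt_add_one _
  refine ⟨_, by positivity, ReachableIn.of_commutator_loop zero_le_one
    (η := verticalOffset α p q / ((|p.1| + 1) ^ α - |p.1| ^ α)) ?_⟩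
  field_simp [(sub_pos.2 hpow).ne']

/-- The points `q` with `|q.1 - p.1| < r`, `|q.2.1 - p.2.1| < r` and vertical offset from `p` less
than `h`: a box of half-sides `r`, `r`, `h` sheared along the plane spanned by `X₁` and `X₂` at
`p`. -/
def shearedBox (α : ℝ) (p : ℝ × ℝ × ℝ) (r h : ℝ) : Set (ℝ × ℝ × ℝ) :=
  {q | |q.1 - p.1| < r ∧ |q.2.1 - p.2.1| < r ∧ |verticalOffset α p q| < h}

theorem ccBall_subset_shearedBox {α : ℝ} (hα : 0 < α) (p : ℝ × ℝ × ℝ) (r : ℝ) :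
    ccBall α p r ⊆ shearedBox α p r (2 * max 1 α * verticalSize α p.1 r) := by
  intro q hq
  obtain ⟨T₀, hT₀, hreach⟩ := exists_pos_reachableIn hα p q
  have htimes : {T | 0 < T ∧ ∃ γ, IsHorizontal α T γ ∧ γ 0 = p ∧ γ T = q}.Nonempty :=
    ⟨T₀, hT₀, hreach.2⟩
  obtain ⟨T, ⟨hT, γ, hγ, rfl, rfl⟩, hTr⟩ := exists_lt_of_csInf_lt htimes hq
  refine ⟨(hγ.abs_fst_sub_le (Set.right_mem_Icc.2 hT.le)).trans_lt hTr,
    (hγ.abs_snd_fst_sub_le hT.le).trans_lt hTr, (hγ.abs_verticalOffset_le hα.le hT.le).trans_lt ?_⟩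
  gcongr
  exact verticalSize_strictMonoOn hα.le hT.le (hT.trans hTr).le hTr

theorem mul_verticalSize_le_rpow_sub_rpow {α r : ℝ} (hα : 0 ≤ α) (x : ℝ) (hr : 0 < r) :
    min 1 α * (1 / 8) ^ (α + 1) * verticalSize α x r ≤
      ((|x| + r / 8) ^ α - |x| ^ α) * r := by
  have hscale : (1 / 8) ^ α * (|x| + r) ^ (α - 1) ≤ (|x| + r / 8) ^ (α - 1) := by
    rw [Real.rpow_sub_one (by positivity), Real.rpow_sub_one (by positivity), mul_div_assoc',
      ← Real.mul_rpow (by norm_num) (by positivity)]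
    gcongr <;> linarith [abs_nonneg x]
  calc min 1 α * (1 / 8) ^ (α + 1) * verticalSize α x r
      = min 1 α * (r / 8 * ((1 / 8) ^ α * (|x| + r) ^ (α - 1))) * r := by
        rw [Real.rpow_add_one (by norm_num), verticalSize]
        ring
    _ ≤ min 1 α * ((|x| + r / 8 - |x|) * (|x| + r / 8) ^ (α - 1)) * r := by
        rw [add_sub_cancel_left]
        gcongr
    _ ≤ ((|x| + r / 8) ^ α - |x| ^ α) * r := by
        gcongr
        exact le_rpow_sub_rpow hα (abs_nonneg x) (by linarith) (by positivity)

theorem shearedBox_subset_ccBall {α r : ℝ} (hα : 0 < α) (p : ℝ × ℝ × ℝ) (hr : 0 < r) :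
    shearedBox α p (r / 8) (min 1 α * (1 / 8) ^ (α + 2) * verticalSize α p.1 r) ⊆
      ccBall α p r := by
  rintro q ⟨hx, hy, hoffset⟩
  set D := (|p.1| + r / 8) ^ α - |p.1| ^ α with hD
  have hDpos : 0 < D := by
    rw [hD, sub_pos]
    gcongr
    linarith
  have hη : |verticalOffset α p q / D| ≤ r / 8 := by
    rw [abs_div, abs_of_pos hDpos, div_le_iff₀ hDpos]
    calc |verticalOffset α p q|
        ≤ min 1 α * (1 / 8) ^ (α + 2) * verticalSize α p.1 r := hoffset.le
      _ = min 1 α * (1 / 8) ^ (α + 1) * verticalSize α p.1 r / 8 := by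
        rw [show α + 2 = α + 1 + 1 by ring, Real.rpow_add_one (by norm_num) (α + 1)]
        ring
      _ ≤ r / 8 * D := by
        linarith [mul_verticalSize_le_rpow_sub_rpow hα.le p.1 hr]
  have hreach : ReachableIn α _ p q := .of_commutator_loop (h := r / 8)
    (η := verticalOffset α p q / D) (by positivity) (mul_div_cancel₀ _ hDpos.ne')
  calc ccDist α p q ≤ _ := hreach.ccDist_le (by positivity)
    _ < r := by linarith

theorem volume_shearedBox {α r h : ℝ} (p : ℝ × ℝ × ℝ) (hr : 0 ≤ r) :
    volume (shearedBox α p r h) = ENNReal.ofReal (8 * r ^ 2 * h) := by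
  set plane : ℝ → ℝ := fun y => p.2.2 + |p.1| ^ α * (y - p.2.1)
  have hplane : Measurable plane := by fun_prop
  have hbox : shearedBox α p r h = Metric.ball p.1 r ×ˢ
      regionBetween (fun y => plane y - h) (fun y => plane y + h) (Metric.ball p.2.1 r) := by
    ext ⟨x, y, z⟩
    have hoffset : |verticalOffset α p (x, y, z)| < h ↔
        z ∈ Set.Ioo (plane y - h) (plane y + h) := by
      rw [abs_lt, Set.mem_Ioo, verticalOffset]
      constructor <;> rintro ⟨_, _⟩ <;> constructor <;> linarith
    simp only [shearedBox, regionBetween, Set.mem_prod, Set.mem_ofPred_eq, hoffset,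
      Metric.mem_ball, Real.dist_eq]
  have hheight (y : ℝ) : plane y + h - (plane y - h) = 2 * h := by ring
  rw [hbox, Measure.volume_eq_prod, Measure.prod_prod, Measure.volume_eq_prod,
    volume_regionBetween_eq_lintegral (hplane.sub_const h).aemeasurable
      (hplane.add_const h).aemeasurable Metric.isOpen_ball.measurableSet]
  simp only [Pi.sub_apply, hheight, setLIntegral_const, Real.volume_ball]
  rw [← ENNReal.ofReal_mul' (by positivity), ← ENNReal.ofReal_mul (by positivity)]
  ring_nf

/-- The section of `B` at height `z`, as a subset of the `(x, y)`-plane. -/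
def horizontalSection (z : ℝ) (B : Set (ℝ × ℝ × ℝ)) : Set (ℝ × ℝ) :=
  {v | (v.1, v.2, z) ∈ B}

theorem horizontalSection_mono {z : ℝ} {A B : Set (ℝ × ℝ × ℝ)} (h : A ⊆ B) :
    horizontalSection z A ⊆ horizontalSection z B :=
  fun _ hv => h hv

theorem mem_horizontalSection_shearedBox {α r h : ℝ} {p : ℝ × ℝ × ℝ} {v : ℝ × ℝ} :
    v ∈ horizontalSection p.2.2 (shearedBox α p r h) ↔
      |v.1 - p.1| < r ∧ |v.2 - p.2.1| < r ∧ |p.1| ^ α * |v.2 - p.2.1| < h := by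
  have hoffset : |verticalOffset α p (v.1, v.2, p.2.2)| = |p.1| ^ α * |v.2 - p.2.1| := by
    rw [verticalOffset, sub_self, zero_sub, abs_neg, abs_mul, abs_of_nonneg (by positivity)]
  rw [← hoffset]
  rfl

section PlaneMeasure

variable {α x y a b m : ℝ}

theorem volume_ball_prod_ball (ha : 0 ≤ a) :
    volume (Metric.ball x a ×ˢ Metric.ball y b) = ENNReal.ofReal (4 * a * b) := by
  rw [Measure.volume_eq_prod, Measure.prod_prod, Real.volume_ball, Real.volume_ball,
    ← ENNReal.ofReal_mul (by positivity)]
  ring_nf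

theorem planeMeasure_ball_prod_ball_le (hα : 0 ≤ α) (ha : 0 ≤ a)
    (hm : ∀ u ∈ Metric.ball x a, |u| ≤ m) :
    planeMeasure α (Metric.ball x a ×ˢ Metric.ball y b) ≤
      ENNReal.ofReal (m ^ α * (4 * a * b)) := by
  have hmeas : MeasurableSet (Metric.ball x a ×ˢ Metric.ball y b) :=
    Metric.isOpen_ball.measurableSet.prod Metric.isOpen_ball.measurableSet
  rcases ha.eq_or_lt with rfl | ha'
  · simp
  have hm₀ : 0 ≤ m := (abs_nonneg x).trans (hm x (Metric.mem_ball_self ha'))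
  rw [planeMeasure, withDensity_apply _ hmeas, ENNReal.ofReal_mul (by positivity),
    ← volume_ball_prod_ball ha, ← setLIntegral_const]
  refine setLIntegral_mono' hmeas fun v hv => ?_
  gcongr
  exact hm _ hv.1

theorem le_planeMeasure_ball_prod_ball (hα : 0 ≤ α) (ha : 0 ≤ a) (hm₀ : 0 ≤ m)
    (hm : ∀ u ∈ Metric.ball x a, m ≤ |u|) :
    ENNReal.ofReal (m ^ α * (4 * a * b)) ≤
      planeMeasure α (Metric.ball x a ×ˢ Metric.ball y b) := by
  have hmeas : MeasurableSet (Metric.ball x a ×ˢ Metric.ball y b) :=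
    Metric.isOpen_ball.measurableSet.prod Metric.isOpen_ball.measurableSet
  rw [planeMeasure, withDensity_apply _ hmeas, ENNReal.ofReal_mul (by positivity),
    ← volume_ball_prod_ball ha, ← setLIntegral_const]
  refine setLIntegral_mono' hmeas fun v hv => ?_
  gcongr
  exact hm _ hv.1

end PlaneMeasure

section SectionMeasure

variable {α r c : ℝ} {p : ℝ × ℝ × ℝ}

theorem mul_abs_add_rpow_lt (hα : 0 ≤ α) {x η C : ℝ} (hC : 0 ≤ C) (hη : 0 ≤ η) (hηr : η < r)
    (h : |x| ^ α * η < C * verticalSize α x r) :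
    η * (|x| + r) ^ α < (2 ^ α * C + 2) * verticalSize α x r := by
  have hr : 0 < r := hη.trans_lt hηr
  have hV : 0 < verticalSize α x r := verticalSize_pos hr
  rcases le_total r |x| with hrx | hxr
  · calc η * (|x| + r) ^ α ≤ η * (2 * |x|) ^ α := by
          gcongr
          linarith
      _ = 2 ^ α * (|x| ^ α * η) := by
          rw [Real.mul_rpow zero_le_two (abs_nonneg x)]
          ring
      _ < 2 ^ α * (C * verticalSize α x r) := by gcongr
      _ ≤ (2 ^ α * C + 2) * verticalSize α x r := by linarith
  · have hM : 0 < |x| + r := by positivity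
    have hrM : r ≤ 2 * (r ^ 2 / (|x| + r)) := by
      rw [mul_div_assoc', le_div_iff₀ hM]
      nlinarith
    calc η * (|x| + r) ^ α < 2 * (r ^ 2 / (|x| + r)) * (|x| + r) ^ α := by
          gcongr
          exact hηr.trans_le hrM
      _ = 2 * verticalSize α x r := by rw [verticalSize_eq_mul_rpow hr, mul_assoc]
      _ ≤ (2 ^ α * C + 2) * verticalSize α x r := by
          gcongr
          exact le_add_of_nonneg_left (by positivity)

theorem planeMeasure_section_shearedBox_le (hα : 0 ≤ α) (hr : 0 < r) (hc : 0 ≤ c) :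
    planeMeasure α (horizontalSection p.2.2 (shearedBox α p r (c * verticalSize α p.1 r))) ≤
      ENNReal.ofReal (4 * (2 ^ α * c + 2) * (r * verticalSize α p.1 r)) := by
  set M := |p.1| + r with hM
  have hMpow : 0 < M ^ α := by positivity
  set b := (2 ^ α * c + 2) * verticalSize α p.1 r / M ^ α with hb
  have hsub : horizontalSection p.2.2 (shearedBox α p r (c * verticalSize α p.1 r)) ⊆
      Metric.ball p.1 r ×ˢ Metric.ball p.2.1 b := by
    intro v hv
    obtain ⟨hx, hy, hxy⟩ := mem_horizontalSection_shearedBox.1 hv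
    refine ⟨hx, ?_⟩
    rw [Metric.mem_ball, Real.dist_eq, lt_div_iff₀ hMpow]
    exact mul_abs_add_rpow_lt hα hc (abs_nonneg _) hy hxy
  have hdensity (u : ℝ) (hu : u ∈ Metric.ball p.1 r) : |u| ≤ M := by
    rw [Metric.mem_ball, Real.dist_eq] at hu
    linarith [abs_sub_abs_le_abs_sub u p.1, hM]
  refine (measure_mono hsub).trans
    ((planeMeasure_ball_prod_ball_le hα hr.le hdensity).trans_eq ?_)
  rw [hb]
  field_simp

theorem le_planeMeasure_section_shearedBox (hα : 0 ≤ α) (hr : 0 < r) (hc : c ≤ 1 / 8) :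
    ENNReal.ofReal ((1 / 16) ^ α * (1 / 8) * c * (r * verticalSize α p.1 r)) ≤
      planeMeasure α
        (horizontalSection p.2.2 (shearedBox α p (r / 8) (c * verticalSize α p.1 r))) := by
  set M := |p.1| + r with hM
  have hMpos : 0 < M := by positivity
  have hrM : r ≤ M := le_add_of_nonneg_left (abs_nonneg _)
  obtain ⟨w, hwp, hw⟩ := exists_abs_sub_eq_and_abs_eq_add p.1 (h := 3 * r / 32) (by positivity)
  set b := c * (r ^ 2 / M) with hb
  have hsub : Metric.ball w (r / 32) ×ˢ Metric.ball p.2.1 b ⊆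
      horizontalSection p.2.2 (shearedBox α p (r / 8) (c * verticalSize α p.1 r)) := by
    rintro v ⟨hx, hy⟩
    rw [Metric.mem_ball, Real.dist_eq] at hx hy
    refine mem_horizontalSection_shearedBox.2 ⟨?_, hy.trans_le ?_, ?_⟩
    · linarith [abs_sub_le v.1 w p.1]
    · calc c * (r ^ 2 / M) ≤ 1 / 8 * (r ^ 2 / r) := by gcongr
        _ = r / 8 := by field_simp
    · calc |p.1| ^ α * |v.2 - p.2.1| ≤ M ^ α * |v.2 - p.2.1| := by
            gcongr
            exact le_add_of_nonneg_right hr.le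
        _ < M ^ α * b := by gcongr
        _ = c * verticalSize α p.1 r := by rw [verticalSize_eq_mul_rpow hr]; ring
  have hdensity (u : ℝ) (hu : u ∈ Metric.ball w (r / 32)) : M / 16 ≤ |u| := by
    rw [Metric.mem_ball, Real.dist_eq] at hu
    linarith [abs_sub_abs_le_abs_sub w u, abs_sub_comm u w, abs_nonneg p.1]
  calc ENNReal.ofReal ((1 / 16) ^ α * (1 / 8) * c * (r * verticalSize α p.1 r))
      = ENNReal.ofReal ((M / 16) ^ α * (4 * (r / 32) * b)) := by
        rw [verticalSize_eq_mul_rpow hr, ← hM, hb, div_eq_mul_one_div M,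
          Real.mul_rpow hMpos.le (by norm_num)]
        ring_nf
    _ ≤ _ := le_planeMeasure_ball_prod_ball hα (by positivity) (by positivity) hdensity
    _ ≤ _ := measure_mono hsub

end SectionMeasure

theorem ofReal_inv_mul_le_iff {C : ℝ} (hC : 0 < C) {a b : ENNReal} :
    ENNReal.ofReal C⁻¹ * a ≤ b ↔ a ≤ ENNReal.ofReal C * b := by
  rw [ENNReal.ofReal_inv_of_pos hC,
    ENNReal.inv_mul_le_iff (ENNReal.ofReal_pos.2 hC).ne' ENNReal.ofReal_ne_top]

/-- Two families of extended nonnegative quantities bound each other up to one constant that does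
not depend on the index. -/
def UniformlyComparable {ι : Type*} (f g : ι → ENNReal) : Prop :=
  ∃ C : ℝ, 0 < C ∧ ∀ i, ENNReal.ofReal C⁻¹ * g i ≤ f i ∧ f i ≤ ENNReal.ofReal C * g i

namespace UniformlyComparable

variable {ι : Type*} {f g h : ι → ENNReal}

theorem of_le {c C : ℝ} (hc : 0 < c) (hle : ∀ i, ENNReal.ofReal c * g i ≤ f i)
    (hge : ∀ i, f i ≤ ENNReal.ofReal C * g i) : UniformlyComparable f g := by
  refine ⟨max c⁻¹ C, by positivity, fun i => ⟨le_trans ?_ (hle i), (hge i).trans ?_⟩⟩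
  · gcongr
    exact inv_le_of_inv_le₀ hc (le_max_left _ _)
  · gcongr
    exact le_max_right _ _

theorem symm (hfg : UniformlyComparable f g) : UniformlyComparable g f := by
  obtain ⟨C, hC, hfg⟩ := hfg
  exact ⟨C, hC, fun i => ⟨(ofReal_inv_mul_le_iff hC).2 (hfg i).2,
    (ofReal_inv_mul_le_iff hC).1 (hfg i).1⟩⟩

theorem trans (hfg : UniformlyComparable f g) (hgh : UniformlyComparable g h) :
    UniformlyComparable f h := by
  obtain ⟨C, hC, hfg⟩ := hfg
  obtain ⟨D, hD, hgh⟩ := hgh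
  refine ⟨C * D, by positivity, fun i => ⟨?_, ?_⟩⟩
  · rw [mul_inv, ENNReal.ofReal_mul (by positivity), mul_assoc]
    exact (mul_le_mul_right (hgh i).1 _).trans (hfg i).1
  · rw [ENNReal.ofReal_mul hC.le, mul_assoc]
    exact (hfg i).2.trans (mul_le_mul_right (hgh i).2 _)

end UniformlyComparable

theorem uniformlyComparable_volume_ccBall_div {α : ℝ} (hα : 0 < α) :
    UniformlyComparable
      (fun i : (ℝ × ℝ × ℝ) × Set.Ioi (0 : ℝ) =>
        volume (ccBall α i.1 i.2) / ENNReal.ofReal i.2)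
      (fun i => ENNReal.ofReal (i.2 * verticalSize α i.1.1 i.2)) := by
  refine .of_le (c := (1 / 8) * (min 1 α * (1 / 8) ^ (α + 2))) (C := 8 * (2 * max 1 α))
    (by positivity) ?_ ?_ <;> rintro ⟨p, r, hr : 0 < r⟩
  · rw [ENNReal.le_div_iff_mul_le (by simp [hr]) (by simp), ← ENNReal.ofReal_mul (by positivity),
      ← ENNReal.ofReal_mul' hr.le]
    refine le_of_eq_of_le ?_ (measure_mono (shearedBox_subset_ccBall hα p hr))
    rw [volume_shearedBox p (by positivity)]
    ring_nf
  · rw [ENNReal.div_le_iff (by simp [hr]) (by simp), ← ENNReal.ofReal_mul (by positivity),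
      ← ENNReal.ofReal_mul' hr.le]
    refine (measure_mono (ccBall_subset_shearedBox hα p r)).trans_eq ?_
    rw [volume_shearedBox p hr.le]
    ring_nf

theorem uniformlyComparable_planeMeasure_section_ccBall {α : ℝ} (hα : 0 < α) :
    UniformlyComparable
      (fun i : (ℝ × ℝ × ℝ) × Set.Ioi (0 : ℝ) =>
        planeMeasure α (horizontalSection i.1.2.2 (ccBall α i.1 i.2)))
      (fun i => ENNReal.ofReal (i.2 * verticalSize α i.1.1 i.2)) := by
  have hinner : min 1 α * (1 / 8) ^ (α + 2) ≤ 1 / 8 := by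
    have hpow : (1 / 8 : ℝ) ^ (α + 2) ≤ (1 / 8) ^ (1 : ℝ) :=
      Real.rpow_le_rpow_of_exponent_ge (by norm_num) (by norm_num) (by linarith)
    rw [Real.rpow_one] at hpow
    exact (mul_le_of_le_one_left (by positivity) (min_le_left 1 α)).trans hpow
  refine .of_le (c := (1 / 16) ^ α * (1 / 8) * (min 1 α * (1 / 8) ^ (α + 2)))
    (C := 4 * (2 ^ α * (2 * max 1 α) + 2)) (by positivity) ?_ ?_ <;>
    rintro ⟨p, r, hr : 0 < r⟩ <;> rw [← ENNReal.ofReal_mul (by positivity)]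
  · exact (le_planeMeasure_section_shearedBox hα.le hr hinner).trans
      (measure_mono (horizontalSection_mono (shearedBox_subset_ccBall hα p hr)))
  · exact (measure_mono (horizontalSection_mono (ccBall_subset_shearedBox hα p r))).trans
      (planeMeasure_section_shearedBox_le hα.le hr (by positivity))

theorem ahlfors_property_general (α : ℝ) (hα : 0 < α) :
    ∃ C : ℝ, 0 < C ∧ ∀ (p : ℝ × ℝ × ℝ) (r : ℝ), 0 < r →
      ENNReal.ofReal C⁻¹ * (volume (ccBall α p r) / ENNReal.ofReal r) ≤
          planeMeasure α (horizontalSection p.2.2 (ccBall α p r)) ∧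
        planeMeasure α (horizontalSection p.2.2 (ccBall α p r)) ≤
          ENNReal.ofReal C * (volume (ccBall α p r) / ENNReal.ofReal r) := by
  obtain ⟨C, hC, hcomp⟩ := (uniformlyComparable_planeMeasure_section_ccBall hα).trans
    (uniformlyComparable_volume_ccBall_div hα).symm
  exact ⟨C, hC, fun p r hr => hcomp (p, ⟨r, hr⟩)⟩

/-- Ahlfors property: the perimeter measure of the section of a CC ball centred on the
plane `z = 0` is comparable with `ℒ³(B(p,r))/r`. -/
theorem ahlfors_property (α : ℝ) (hα : 1 ≤ α) :
    ∃ C : ℝ, 0 < C ∧ ∀ xb yb : ℝ, ∀ r : ℝ, 0 < r →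
      ENNReal.ofReal C⁻¹ * (volume (ccBall α (xb, yb, 0) r) / ENNReal.ofReal r) ≤
          planeMeasure α {v : ℝ × ℝ | (v.1, v.2, (0 : ℝ)) ∈ ccBall α (xb, yb, 0) r} ∧
        planeMeasure α {v : ℝ × ℝ | (v.1, v.2, (0 : ℝ)) ∈ ccBall α (xb, yb, 0) r} ≤
          ENNReal.ofReal C * (volume (ccBall α (xb, yb, 0) r) / ENNReal.ofReal r) := by
  obtain ⟨C, hC, hcomp⟩ := ahlfors_property_general α (zero_lt_one.trans_le hα)
  exact ⟨C, hC, fun xb yb r hr => hcomp (xb, yb, 0) r hr⟩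
end

section
/- Let α ≥ 1. There exists a constant C > 0, depending only on α, such that for all r > 0 and z > 0 one has ∫_{D_r(z)} z^{1/α} / η^{(α+1)/α} dℋ¹(ξ,η) ≤ C r, where D_r(z) = { (ξ,η) ∈ ℝ × (0,∞) : max(|ξ|, |η|) = r and z ≤ η r^α } and ℋ¹ is the one-dimensional Hausdorff measure in the plane (with respect to the Euclidean metric). -/
/-!
With `a = z / r ^ α`, the integrand at height `η ≥ a` is exactly `α * r` times the density at `η` of
the Pareto distribution of scale `a` and rate `1 / α`, and this density vanishes below height `a`.
The upper half of the max-norm sphere consists of two vertical sides, on each of which a probability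
density has integral at most `1`, and a horizontal side of length `2 * r` at height `r`, where the
density is at most `1 / (α * r)`. The total is at most `α * r * (2 + 2 * r / (α * r))`.
-/

open MeasureTheory ProbabilityTheory Set
open scoped ENNReal

section ProdMk

variable {X Y : Type*} [PseudoEMetricSpace X] [PseudoEMetricSpace Y]

lemma isometry_prodMk_left (x : X) : Isometry fun y : Y ↦ (x, y) :=
  fun _ _ ↦ by simp [Prod.edist_eq]

lemma isometry_prodMk_right (y : Y) : Isometry fun x : X ↦ (x, y) :=
  fun _ _ ↦ by simp [Prod.edist_eq]

end ProdMk

lemma setLIntegral_image_hausdorffMeasure {X Y : Type*} [EMetricSpace X] [CompleteSpace X]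
    [MeasurableSpace X] [BorelSpace X] [EMetricSpace Y] [MeasurableSpace Y] [BorelSpace Y]
    {f : X → Y} (hf : Isometry f) {d : ℝ} (hd : 0 ≤ d) (s : Set X) (g : Y → ℝ≥0∞) :
    ∫⁻ y in f '' s, g y ∂μH[d] = ∫⁻ x in s, g (f x) ∂μH[d] := by
  have hpres : MeasurePreserving f μH[d] (μH[d].restrict (range f)) :=
    ⟨hf.continuous.measurable, hf.map_hausdorffMeasure (.inl hd)⟩
  rw [hpres.setLIntegral_comp_emb hf.isClosedEmbedding.measurableEmbedding,
    Measure.restrict_restrict_of_subset (image_subset_range f s)]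

lemma setLIntegral_singleton_prod_hausdorffMeasure (x : ℝ) (s : Set ℝ) (g : ℝ × ℝ → ℝ≥0∞) :
    ∫⁻ w in {x} ×ˢ s, g w ∂μH[1] = ∫⁻ y in s, g (x, y) := by
  rw [singleton_prod, setLIntegral_image_hausdorffMeasure (isometry_prodMk_left x) zero_le_one,
    hausdorffMeasure_real]

lemma setLIntegral_prod_singleton_hausdorffMeasure (s : Set ℝ) (y : ℝ) (g : ℝ × ℝ → ℝ≥0∞) :
    ∫⁻ w in s ×ˢ {y}, g w ∂μH[1] = ∫⁻ x in s, g (x, y) := by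
  rw [prod_singleton, setLIntegral_image_hausdorffMeasure (isometry_prodMk_right y) zero_le_one,
    hausdorffMeasure_real]

lemma upper_sphere_subset_sides (r : ℝ) :
    {w : ℝ × ℝ | 0 < w.2 ∧ max |w.1| |w.2| = r} ⊆
      Icc (-r) r ×ˢ {r} ∪ ({r} ×ˢ univ ∪ {-r} ×ˢ univ) := by
  rintro ⟨x, y⟩ ⟨hy : 0 < y, hxy : max |x| |y| = r⟩
  rw [abs_of_pos hy, max_eq_iff] at hxy
  rcases hxy with ⟨hx, -⟩ | ⟨rfl, hx⟩
  · rcases eq_or_eq_neg_of_abs_eq hx with rfl | rfl <;> simp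
  · simp [abs_le.1 hx]

lemma setLIntegral_upper_sphere_le (r : ℝ) (f : ℝ → ℝ≥0∞) :
    ∫⁻ w in {w : ℝ × ℝ | 0 < w.2 ∧ max |w.1| |w.2| = r}, f w.2 ∂μH[1] ≤
      f r * ENNReal.ofReal (2 * r) + 2 * ∫⁻ y, f y := by
  calc
    _ ≤ ∫⁻ w in Icc (-r) r ×ˢ {r} ∪ ({r} ×ˢ univ ∪ {-r} ×ˢ univ), f w.2 ∂μH[1] :=
      lintegral_mono_set (upper_sphere_subset_sides r)
    _ ≤ ∫⁻ w in Icc (-r) r ×ˢ {r}, f w.2 ∂μH[1] +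
        (∫⁻ w in {r} ×ˢ univ, f w.2 ∂μH[1] + ∫⁻ w in {-r} ×ˢ univ, f w.2 ∂μH[1]) :=
      (lintegral_union_le _ _ _).trans (by gcongr; exact lintegral_union_le _ _ _)
    _ = f r * ENNReal.ofReal (2 * r) + 2 * ∫⁻ y, f y := by
      simp only [setLIntegral_singleton_prod_hausdorffMeasure,
        setLIntegral_prod_singleton_hausdorffMeasure, setLIntegral_const, Real.volume_Icc,
        Measure.restrict_univ, sub_neg_eq_add, two_mul]

lemma paretoPDFReal_le_div {t p x : ℝ} (ht : 0 ≤ t) (hp : 0 ≤ p) (hx : 0 < x) :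
    paretoPDFReal t p x ≤ p / x := by
  unfold paretoPDFReal
  split_ifs with htx
  · calc
      p * t ^ p * x ^ (-(p + 1)) ≤ p * x ^ p * x ^ (-(p + 1)) := by gcongr
      _ = p / x := by
        rw [mul_assoc, ← Real.rpow_add hx, div_eq_mul_inv, ← Real.rpow_neg_one]
        ring_nf
  · positivity

lemma rpow_div_rpow_eq_mul_paretoPDFReal {α r z y : ℝ} (hα : 0 < α) (hr : 0 < r) (hz : 0 < z)
    (hy : z ≤ y * r ^ α) :
    z ^ (1 / α) / y ^ ((α + 1) / α) = α * r * paretoPDFReal (z / r ^ α) (1 / α) y := by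
  have hrα : 0 < r ^ α := by positivity
  have hy_pos : 0 < y := pos_of_mul_pos_left (hz.trans_le hy) hrα.le
  have hscale : (z / r ^ α) ^ (1 / α) = z ^ (1 / α) / r := by
    rw [Real.div_rpow hz.le hrα.le, one_div, Real.rpow_rpow_inv hr.le hα.ne']
  have hexp : 1 / α + 1 = (α + 1) / α := by field_simp; ring
  rw [paretoPDFReal, if_pos ((div_le_iff₀ hrα).2 hy), hscale, hexp, Real.rpow_neg hy_pos.le]
  field_simp

theorem boundary_integral_bound_general {α r z : ℝ} (hα : 0 < α) (hr : 0 < r) (hz : 0 < z) :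
    ∫⁻ w in {w : ℝ × ℝ | 0 < w.2 ∧ max |w.1| |w.2| = r ∧ z ≤ w.2 * r ^ α},
        ENNReal.ofReal (z ^ (1 / α) / w.2 ^ ((α + 1) / α)) ∂(μH[1] : Measure (ℝ × ℝ)) ≤
      ENNReal.ofReal ((2 + 2 * α) * r) := by
  set a := z / r ^ α
  have ha : 0 < a := by positivity
  have hp : 0 < 1 / α := by positivity
  calc
    _ ≤ ∫⁻ w in {w : ℝ × ℝ | 0 < w.2 ∧ max |w.1| |w.2| = r ∧ z ≤ w.2 * r ^ α},
        ENNReal.ofReal (α * r) * paretoPDF a (1 / α) w.2 ∂μH[1] := by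
      refine setLIntegral_mono' (by measurability) fun w hw ↦ ?_
      rw [rpow_div_rpow_eq_mul_paretoPDFReal hα hr hz hw.2.2, ENNReal.ofReal_mul (by positivity),
        paretoPDF]
    _ ≤ ∫⁻ w in {w : ℝ × ℝ | 0 < w.2 ∧ max |w.1| |w.2| = r},
        ENNReal.ofReal (α * r) * paretoPDF a (1 / α) w.2 ∂μH[1] :=
      lintegral_mono_set fun w hw ↦ ⟨hw.1, hw.2.1⟩
    _ ≤ ENNReal.ofReal (α * r) *
        (paretoPDF a (1 / α) r * ENNReal.ofReal (2 * r) + 2 * ∫⁻ y, paretoPDF a (1 / α) y) := by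
      rw [lintegral_const_mul' _ _ ENNReal.ofReal_ne_top]
      gcongr
      exact setLIntegral_upper_sphere_le r _
    _ ≤ ENNReal.ofReal (α * r) * (ENNReal.ofReal (1 / α / r) * ENNReal.ofReal (2 * r) + 2) := by
      rw [lintegral_paretoPDF_eq_one ha hp, mul_one]
      gcongr
      exact ENNReal.ofReal_le_ofReal (paretoPDFReal_le_div ha.le hp.le hr)
    _ = ENNReal.ofReal ((2 + 2 * α) * r) := by
      rw [← ENNReal.ofReal_ofNat 2, ← ENNReal.ofReal_mul (by positivity),
        ← ENNReal.ofReal_add (by positivity) (by positivity), ← ENNReal.ofReal_mul (by positivity)]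
      congr 1
      field_simp

/-- The boundary integral `J_r(z) = ∫_{D_r(z)} z^{1/α} η^{-(α+1)/α} dℋ¹` over the part
of the max-norm sphere of radius `r` where `η > 0` and `z ≤ η r^α` is at most `C r`. -/
theorem boundary_integral_bound (α : ℝ) (hα : 1 ≤ α) :
    ∃ C : ℝ, 0 < C ∧ ∀ r z : ℝ, 0 < r → 0 < z →
      (∫⁻ w in {w : ℝ × ℝ | 0 < w.2 ∧ max |w.1| |w.2| = r ∧ z ≤ w.2 * r ^ α},
          ENNReal.ofReal (z ^ (1 / α) / w.2 ^ ((α + 1) / α))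
          ∂(μH[1] : Measure (ℝ × ℝ))) ≤ ENNReal.ofReal (C * r) := by
  have hα_pos : 0 < α := by linarith
  exact ⟨2 + 2 * α, by positivity, fun _ _ hr hz ↦ boundary_integral_bound_general hα_pos hr hz⟩
end

section
/- Let α ≥ 1, x′ > 0 and z′ > 0. Then the equation τ ( (x′ + τ)^α − x′^α ) = z′ has a unique solution τ > 0, and there exist constants c, C > 0 depending only on α such that c · m ≤ τ ≤ C · m, where m = min{ (z′ / x′^{α−1})^{1/2}, z′^{1/(α+1)} }. -/
/-!
By convexity of the power function, `(x + t) ^ α - x ^ α` is comparable to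
`t * max x t ^ (α - 1)`, so the left-hand side of the equation is comparable to
`max (x ^ (α - 1) * t ^ 2) (t ^ (α + 1))`. The generalized inverse of this maximum is the minimum
of the inverses of its two terms, which is the scale in the theorem. Constants pass through
the inverse because the maximum grows at least linearly under dilation of `t`.
-/

open Filter Set

section PowerTangent

variable {α x y t : ℝ}

theorem rpow_tangent_le (hα : 1 ≤ α) (hx : 0 ≤ x) (hy : 0 ≤ y) :
    α * x ^ (α - 1) * (y - x) ≤ y ^ α - x ^ α := by
  rcases hx.eq_or_lt with rfl | hx
  · rcases hα.eq_or_lt with rfl | hα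
    · simp
    · simpa [Real.zero_rpow (sub_pos.2 hα).ne', Real.zero_rpow (one_pos.trans hα).ne']
        using Real.rpow_nonneg hy α
  · have bernoulli : 1 + α * (y / x - 1) ≤ (y / x) ^ α := by
      simpa using one_add_mul_self_le_rpow_one_add
        (by linarith [div_nonneg hy hx.le] : -1 ≤ y / x - 1) hα
    rw [Real.div_rpow hy hx.le, le_div_iff₀ (Real.rpow_pos_of_pos hx α)] at bernoulli
    have tangent_eq : α * x ^ (α - 1) * (y - x) = (1 + α * (y / x - 1)) * x ^ α - x ^ α := by
      rw [Real.rpow_sub_one hx.ne']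
      field_simp
      ring
    linarith

theorem max_le_add_rpow_sub_rpow (hα : 1 ≤ α) (hx : 0 ≤ x) (ht : 0 ≤ t) :
    max (x ^ (α - 1) * t) (t ^ α) ≤ (x + t) ^ α - x ^ α := by
  refine max_le ?_ (by linarith [Real.add_rpow_le_rpow_add hx ht hα])
  calc x ^ (α - 1) * t ≤ α * (x ^ (α - 1) * t) := le_mul_of_one_le_left (by positivity) hα
    _ = α * x ^ (α - 1) * (x + t - x) := by ring
    _ ≤ (x + t) ^ α - x ^ α := rpow_tangent_le hα hx (add_nonneg hx ht)

theorem add_rpow_sub_rpow_le (hα : 1 ≤ α) (hx : 0 ≤ x) (ht : 0 ≤ t) :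
    (x + t) ^ α - x ^ α ≤ α * 2 ^ (α - 1) * (max x t ^ (α - 1) * t) := by
  have : 0 ≤ α - 1 := sub_nonneg.2 hα
  have add_le : x + t ≤ 2 * max x t := by linarith [le_max_left x t, le_max_right x t]
  calc (x + t) ^ α - x ^ α ≤ α * (x + t) ^ (α - 1) * t := by
        linarith [rpow_tangent_le hα (add_nonneg hx ht) hx]
    _ ≤ α * (2 * max x t) ^ (α - 1) * t := by gcongr
    _ = α * 2 ^ (α - 1) * (max x t ^ (α - 1) * t) := by
        rw [Real.mul_rpow zero_le_two (le_max_of_le_left hx)]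
        ring

end PowerTangent

/-- The left-hand side of the equation for `τ`, as a function of `t = τ`. -/
noncomputable def tauMap (α x t : ℝ) : ℝ := t * ((x + t) ^ α - x ^ α)

/-- The model for `tauMap α x`: its first term dominates for `t ≤ x`, its second for `x ≤ t`. -/
noncomputable def tauModel (α x t : ℝ) : ℝ := max (x ^ (α - 1) * t ^ 2) (t ^ (α + 1))

/-- The generalized inverse of `tauModel α x`, which is the size of the solution `τ`. -/
noncomputable def tauScale (α x z : ℝ) : ℝ :=
  min ((z / x ^ (α - 1)) ^ ((1 : ℝ) / 2)) (z ^ (1 / (α + 1)))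

theorem tauMap_nonneg {α x t : ℝ} (hα : 0 ≤ α) (hx : 0 ≤ x) (ht : 0 ≤ t) : 0 ≤ tauMap α x t :=
  mul_nonneg ht (sub_nonneg.2 (Real.rpow_le_rpow hx (le_add_of_nonneg_right ht) hα))

section UniqueSolution

variable {α x z : ℝ}

theorem continuous_tauMap (hα : 0 ≤ α) : Continuous (tauMap α x) := by
  have : Continuous fun t : ℝ => (x + t) ^ α :=
    (continuous_const.add continuous_id).rpow_const fun _ => Or.inr hα
  unfold tauMap
  fun_prop

theorem strictMonoOn_tauMap (hα : 0 < α) (hx : 0 ≤ x) : StrictMonoOn (tauMap α x) (Ici 0) := by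
  intro s (hs : 0 ≤ s) t _ hst
  have increment_nonneg : 0 ≤ (x + s) ^ α - x ^ α :=
    sub_nonneg.2 (Real.rpow_le_rpow hx (by linarith) hα.le)
  have increment_lt : (x + s) ^ α - x ^ α < (x + t) ^ α - x ^ α :=
    sub_lt_sub_right (Real.rpow_lt_rpow (add_nonneg hx hs) (by linarith) hα) _
  exact mul_lt_mul'' hst increment_lt hs increment_nonneg

theorem tendsto_tauMap_atTop (hα : 0 < α) : Tendsto (tauMap α x) atTop atTop :=
  tendsto_id.atTop_mul_atTop₀ <| tendsto_atTop_add_const_right _ _ <|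
    (tendsto_rpow_atTop hα).comp (tendsto_atTop_add_const_left _ x tendsto_id)

theorem existsUnique_tauMap_eq (hα : 0 < α) (hx : 0 ≤ x) (hz : 0 < z) :
    ∃! t, 0 < t ∧ tauMap α x t = z := by
  have map_zero : tauMap α x 0 = 0 := zero_mul _
  obtain ⟨t, ht, hzt⟩ : z ∈ tauMap α x '' Ici 0 :=
    intermediate_value_Ici (continuous_tauMap hα.le).continuousOn (tendsto_tauMap_atTop hα)
      (map_zero.trans_le hz.le)
  have t_ne_zero : t ≠ 0 := by
    rintro rfl
    exact hz.ne (map_zero.symm.trans hzt)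
  refine ⟨t, ⟨lt_of_le_of_ne ht t_ne_zero.symm, hzt⟩, ?_⟩
  rintro s ⟨hs, hzs⟩
  exact (strictMonoOn_tauMap hα hx).injOn hs.le ht (hzs.trans hzt.symm)

end UniqueSolution

section Model

variable {α x t z k : ℝ}

theorem max_rpow_mul_sq_eq_tauModel (hα : 1 ≤ α) (hx : 0 ≤ x) (ht : 0 ≤ t) :
    max x t ^ (α - 1) * t ^ 2 = tauModel α x t := by
  have pow_eq : t ^ (α - 1) * t ^ 2 = t ^ (α + 1) := by
    rw [← Real.rpow_two, ← Real.rpow_add_of_nonneg ht (sub_nonneg.2 hα) zero_le_two]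
    ring_nf
  rw [(Real.monotoneOn_rpow_Ici_of_exponent_nonneg (sub_nonneg.2 hα)).map_max hx ht,
    max_mul_of_nonneg _ _ (sq_nonneg t), pow_eq, tauModel]

theorem tauModel_le_tauMap (hα : 1 ≤ α) (hx : 0 ≤ x) (ht : 0 ≤ t) :
    tauModel α x t ≤ tauMap α x t :=
  calc tauModel α x t = t * max (x ^ (α - 1) * t) (t ^ α) := by
        rw [tauModel, mul_max_of_nonneg _ _ ht, Real.rpow_add_one' ht (by linarith)]
        ring_nf
    _ ≤ tauMap α x t :=
        mul_le_mul_of_nonneg_left (max_le_add_rpow_sub_rpow hα hx ht) ht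

theorem tauMap_le_mul_tauModel (hα : 1 ≤ α) (hx : 0 ≤ x) (ht : 0 ≤ t) :
    tauMap α x t ≤ α * 2 ^ (α - 1) * tauModel α x t :=
  calc tauMap α x t ≤ t * (α * 2 ^ (α - 1) * (max x t ^ (α - 1) * t)) :=
        mul_le_mul_of_nonneg_left (add_rpow_sub_rpow_le hα hx ht) ht
    _ = α * 2 ^ (α - 1) * (max x t ^ (α - 1) * t ^ 2) := by ring
    _ = α * 2 ^ (α - 1) * tauModel α x t := by rw [max_rpow_mul_sq_eq_tauModel hα hx ht]

theorem mul_tauModel_le_tauModel_mul (hα : 0 ≤ α) (hx : 0 ≤ x) (ht : 0 ≤ t) (hk : 1 ≤ k) :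
    k * tauModel α x t ≤ tauModel α x (k * t) := by
  have hk₀ : 0 ≤ k := zero_le_one.trans hk
  rw [tauModel, tauModel, mul_max_of_nonneg _ _ hk₀, Real.mul_rpow hk₀ ht]
  refine max_le_max ?_ ?_
  · calc k * (x ^ (α - 1) * t ^ 2) ≤ k ^ 2 * (x ^ (α - 1) * t ^ 2) := by
          gcongr
          exact le_self_pow₀ hk two_ne_zero
      _ = x ^ (α - 1) * (k * t) ^ 2 := by ring
  · gcongr
    exact Real.self_le_rpow_of_one_le hk (by linarith)

theorem le_tauScale_iff (hα : 0 < α + 1) (hx : 0 < x) (hz : 0 ≤ z) (ht : 0 ≤ t) :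
    t ≤ tauScale α x z ↔ tauModel α x t ≤ z := by
  have hxα : 0 < x ^ (α - 1) := Real.rpow_pos_of_pos hx _
  rw [tauScale, tauModel, le_min_iff, max_le_iff, one_div, one_div,
    Real.le_rpow_inv_iff_of_pos ht (div_nonneg hz hxα.le) two_pos,
    Real.le_rpow_inv_iff_of_pos ht hz hα, Real.rpow_two, le_div_iff₀' hxα]

theorem tauScale_le_iff (hα : 0 < α + 1) (hx : 0 < x) (hz : 0 ≤ z) (ht : 0 ≤ t) :
    tauScale α x z ≤ t ↔ z ≤ tauModel α x t := by
  have hxα : 0 < x ^ (α - 1) := Real.rpow_pos_of_pos hx _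
  rw [tauScale, tauModel, min_le_iff, le_max_iff, one_div, one_div,
    Real.rpow_inv_le_iff_of_pos (div_nonneg hz hxα.le) ht two_pos,
    Real.rpow_inv_le_iff_of_pos hz ht hα, Real.rpow_two, div_le_iff₀' hxα]

theorem le_tauScale_tauMap (hα : 1 ≤ α) (hx : 0 < x) (ht : 0 ≤ t) :
    t ≤ tauScale α x (tauMap α x t) :=
  (le_tauScale_iff (by linarith) hx (tauMap_nonneg (by linarith) hx.le ht) ht).2
    (tauModel_le_tauMap hα hx.le ht)

theorem tauScale_tauMap_le (hα : 1 ≤ α) (hx : 0 < x) (ht : 0 ≤ t) :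
    tauScale α x (tauMap α x t) ≤ α * 2 ^ (α - 1) * t := by
  have hα₀ : 0 ≤ α := zero_le_one.trans hα
  have one_le_const : 1 ≤ α * 2 ^ (α - 1) :=
    one_le_mul_of_one_le_of_one_le hα (Real.one_le_rpow one_le_two (sub_nonneg.2 hα))
  refine (tauScale_le_iff (by linarith) hx (tauMap_nonneg hα₀ hx.le ht) (by positivity)).2 ?_
  exact (tauMap_le_mul_tauModel hα hx.le ht).trans
    (mul_tauModel_le_tauModel_mul hα₀ hx.le ht one_le_const)

end Model

/-- The equation `τ((x' + τ)^α - x'^α) = z'` has a unique positive solution, which is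
comparable with `min{(z'/x'^{α-1})^{1/2}, z'^{1/(α+1)}}`. -/
theorem tau_equation (α : ℝ) (hα : 1 ≤ α) :
    ∃ c C : ℝ, 0 < c ∧ 0 < C ∧ ∀ x' z' : ℝ, 0 < x' → 0 < z' →
      (∃! τ : ℝ, 0 < τ ∧ τ * ((x' + τ) ^ α - x' ^ α) = z') ∧
      ∀ τ : ℝ, 0 < τ → τ * ((x' + τ) ^ α - x' ^ α) = z' →
        c * min ((z' / x' ^ (α - 1)) ^ ((1 : ℝ) / 2)) (z' ^ (1 / (α + 1))) ≤ τ ∧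
          τ ≤ C * min ((z' / x' ^ (α - 1)) ^ ((1 : ℝ) / 2)) (z' ^ (1 / (α + 1))) := by
  have hα₀ : 0 < α := one_pos.trans_le hα
  have const_pos : 0 < α * 2 ^ (α - 1) := by positivity
  refine ⟨(α * 2 ^ (α - 1))⁻¹, 1, inv_pos.2 const_pos, one_pos, fun x z hx hz => ⟨?_, ?_⟩⟩
  · exact existsUnique_tauMap_eq hα₀ hx.le hz
  · rintro τ hτ rfl
    exact ⟨(inv_mul_le_iff₀ const_pos).2 (tauScale_tauMap_le hα hx hτ.le),
      (le_tauScale_tauMap hα hx hτ.le).trans_eq (one_mul _).symm⟩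
end

section
/- Let α ≥ 1. For h = (h₁,h₂) with h₁, h₂ > 0 and x′ > 0 define ẑ′(x′,h) = h₂² (x′+h₁)^{α−1} + h₁ (x′+h₁)^α − ( (x′+h₁)^{α+1} − x′^{α+1} ) / (α+1), which is positive, and let τ̂(x′,h) be the unique positive solution τ of τ ( (x′+τ)^α − x′^α ) = ẑ′(x′,h). Then for every σ₀ > 0 there exists ε₀ > 0, depending only on α and σ₀, such that for all h₁, h₂ > 0 and all x′ > max(h₁,h₂)/ε₀, the function x′ ↦ x′^α τ̂(x′,h) is differentiable and | ∂/∂x′ ( x′^α τ̂(x′,h) ) | ≤ σ₀ x′^α. -/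
/-- `ẑ′(x′,h) = h₂² (x′+h₁)^{α−1} + h₁ (x′+h₁)^α − ((x′+h₁)^{α+1} − x′^{α+1})/(α+1)`. -/
noncomputable def zHat (α x' h₁ h₂ : ℝ) : ℝ :=
  h₂ ^ 2 * (x' + h₁) ^ (α - 1) + h₁ * (x' + h₁) ^ α -
    ((x' + h₁) ^ (α + 1) - x' ^ (α + 1)) / (α + 1)

/-- `τ̂(x′, z′)`: the unique positive solution `τ` of `τ((x′+τ)^α − x′^α) = z′`
(defined as the infimum of the solution set). -/
noncomputable def tauHat (α x' z' : ℝ) : ℝ :=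
  sInf {τ : ℝ | 0 < τ ∧ τ * ((x' + τ) ^ α - x' ^ α) = z'}

/-! Both `τ((x + τ)^α - x^α)` and `ẑ′` are homogeneous of degree `α + 1`, so `τ̂ = x s`, where `s`
solves the one-variable equation `s((1 + s)^α - 1) = ẑ′ / x^(α+1)`. Writing `g` for its left-hand
side, the chain rule and the inverse function theorem give
`∂(x^α τ̂)/∂x = (α + 1) x^α (s - g(s)/g'(s)) + (∂ẑ′/∂x)/g'(s)`.
Here `g(s) ≤ s g'(s)`; moreover `0 ≤ ∂ẑ′/∂x` by convexity of powers, and `x ∂ẑ′/∂x ≤ (α + 1) ẑ′`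
by Euler's identity and the monotonicity of `ẑ′` in `h`. So the derivative lies between `0` and
`(α + 1) x^α s`. Finally, `α s² ≤ g(s)` and the quadratic smallness of `ẑ′ / x^(α+1)` in `|h| / x`
make `s` small. -/

open Set Filter Topology

lemma mul_rpow_sub_one_mul_sub_le_rpow_sub_rpow {p x y : ℝ} (hp : 1 ≤ p) (hx : 0 < x)
    (hy : 0 ≤ y) :
    p * x ^ (p - 1) * (y - x) ≤ y ^ p - x ^ p := by
  have bernoulli : 1 + p * (y / x - 1) ≤ (y / x) ^ p := by
    have hyx : 0 ≤ y / x := by positivity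
    simpa only [add_sub_cancel] using
      one_add_mul_self_le_rpow_one_add (s := y / x - 1) (by linarith) hp
  rw [Real.div_rpow hy hx.le, le_div_iff₀ (by positivity)] at bernoulli
  have expand : (1 + p * (y / x - 1)) * x ^ p = x ^ p + p * x ^ (p - 1) * (y - x) := by
    rw [Real.rpow_sub_one hx.ne']
    field_simp
  linarith

section Profile

/-- The left-hand side of the equation `τ((x + τ)^α - x^α) = z` at `x = 1`, to which the general
equation reduces by homogeneity under `τ = x s`. -/
noncomputable def profile (α s : ℝ) : ℝ := s * ((1 + s) ^ α - 1)

variable {α s w : ℝ}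

lemma strictMonoOn_profile (hα : 0 < α) : StrictMonoOn (profile α) (Ici 0) := by
  intro s (hs : 0 ≤ s) t _ hst
  have one_le : 1 ≤ (1 + s) ^ α := Real.one_le_rpow (by linarith) hα.le
  have rpow_lt : (1 + s) ^ α < (1 + t) ^ α :=
    Real.rpow_lt_rpow (by linarith) (by linarith) hα
  exact mul_lt_mul'' hst (by linarith) hs (by linarith)

lemma tendsto_profile_atTop (hα : 0 < α) : Tendsto (profile α) atTop atTop :=
  tendsto_id.atTop_mul_atTop₀ <| tendsto_atTop_add_const_right _ _ <|
    (tendsto_rpow_atTop hα).comp <| tendsto_atTop_add_const_left _ 1 tendsto_id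

lemma exists_pos_profile_eq (hα : 0 < α) (hw : 0 < w) : ∃ s, 0 < s ∧ profile α s = w := by
  have cont : Continuous (profile α) :=
    continuous_id.mul <| ((continuous_const.add continuous_id).rpow_const
      fun _ => Or.inr hα.le).sub continuous_const
  obtain ⟨s, hs, rfl⟩ := isPreconnected_Ici.intermediate_value_Ici self_mem_Ici
    (le_principal_iff.2 (Ici_mem_atTop 0)) cont.continuousOn (tendsto_profile_atTop hα)
    (show profile α 0 ≤ w by simpa only [profile, zero_mul] using hw.le)
  refine ⟨s, lt_of_le_of_ne hs ?_, rfl⟩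
  rintro rfl
  simp [profile] at hw

lemma hasStrictDerivAt_profile (hs : 0 < 1 + s) :
    HasStrictDerivAt (profile α) ((1 + s) ^ α - 1 + s * (α * (1 + s) ^ (α - 1))) s := by
  have hpow := (Real.hasStrictDerivAt_rpow_const (p := α) (Or.inl hs.ne')).comp s
    ((hasStrictDerivAt_id s).const_add 1)
  exact ((hasStrictDerivAt_id s).mul (hpow.sub_const 1)).congr_deriv (by simp)

lemma deriv_profile_pos (hα : 0 < α) (hs : 0 < s) : 0 < deriv (profile α) s := by
  rw [(hasStrictDerivAt_profile (by linarith)).hasDerivAt.deriv]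
  have : 1 < (1 + s) ^ α := Real.one_lt_rpow (by linarith) hα
  have : 0 < s * (α * (1 + s) ^ (α - 1)) := by positivity
  linarith

lemma profile_le_mul_deriv (hα : 0 ≤ α) (hs : 0 < 1 + s) :
    profile α s ≤ s * deriv (profile α) s := by
  rw [(hasStrictDerivAt_profile hs).hasDerivAt.deriv, profile]
  have : 0 ≤ s ^ 2 * (α * (1 + s) ^ (α - 1)) := by positivity
  linarith

lemma mul_sq_le_profile (hα : 1 ≤ α) (hs : 0 ≤ s) : α * s ^ 2 ≤ profile α s := by
  have bernoulli := one_add_mul_self_le_rpow_one_add (by linarith : -1 ≤ s) hα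
  calc α * s ^ 2 = s * (α * s) := by ring
    _ ≤ profile α s := mul_le_mul_of_nonneg_left (by linarith) hs

end Profile

section TauHat

variable {α s x z : ℝ}

lemma tauHat_eq_mul_tauHat_one (hx : 0 < x) :
    tauHat α x z = x * tauHat α 1 (z / x ^ (α + 1)) := by
  have scaling (s : ℝ) (hs : 0 < s) :
      x * s * ((x + x * s) ^ α - x ^ α) = z ↔
        s * ((1 + s) ^ α - 1 ^ α) = z / x ^ (α + 1) := by
    rw [show x + x * s = x * (1 + s) by ring, Real.mul_rpow hx.le (by linarith), Real.one_rpow,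
      eq_div_iff (by positivity), Real.rpow_add_one hx.ne']
    ring_nf
  rw [tauHat, tauHat, ← smul_eq_mul, ← Real.sInf_smul_of_nonneg hx.le]
  congr 1
  ext τ
  rw [mem_smul_set_iff_inv_smul_mem₀ hx.ne', smul_eq_mul, mem_ofPred, mem_ofPred,
    mul_pos_iff_of_pos_left (by positivity)]
  refine and_congr_right fun hτ => ?_
  simpa only [mul_inv_cancel_left₀ hx.ne'] using scaling (x⁻¹ * τ) (by positivity)

lemma tauHat_one_profile (hα : 0 < α) (hs : 0 < s) : tauHat α 1 (profile α s) = s := by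
  have solutions : {τ : ℝ | 0 < τ ∧ τ * ((1 + τ) ^ α - 1 ^ α) = profile α s} = {s} := by
    ext τ
    simp only [Real.one_rpow, mem_ofPred_eq, mem_singleton_iff]
    constructor
    · rintro ⟨hτ, heq⟩
      exact (strictMonoOn_profile hα).injOn hτ.le hs.le heq
    · rintro rfl
      exact ⟨hs, rfl⟩
  rw [tauHat, solutions, csInf_singleton]

lemma hasDerivAt_tauHat_one (hα : 0 < α) (hs : 0 < s) :
    HasDerivAt (tauHat α 1) (deriv (profile α) s)⁻¹ (profile α s) := by
  have hstrict := hasStrictDerivAt_profile (α := α) (by linarith : 0 < 1 + s)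
  rw [← hstrict.hasDerivAt.deriv] at hstrict
  refine (hstrict.to_local_left_inverse (deriv_profile_pos hα hs).ne' ?_).hasDerivAt
  filter_upwards [lt_mem_nhds hs] with t ht using tauHat_one_profile hα ht

variable {f : ℝ → ℝ} {f' : ℝ}

lemma hasDerivAt_rpow_mul_tauHat (hα : 0 < α) (hx : 0 < x) (hs : 0 < s)
    (hf : HasDerivAt f f' x) (hsf : profile α s = f x / x ^ (α + 1)) :
    HasDerivAt (fun y => y ^ α * tauHat α y (f y))
      ((α + 1) * x ^ α * (s - profile α s / deriv (profile α) s) + f' / deriv (profile α) s)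
      x := by
  have hpow : HasDerivAt (fun y : ℝ => y ^ (α + 1)) ((α + 1) * x ^ α) x := by
    simpa only [add_sub_cancel_right] using
      Real.hasDerivAt_rpow_const (p := α + 1) (Or.inl hx.ne')
  have hpow_ne : x ^ (α + 1) ≠ 0 := by positivity
  have hinv := hasDerivAt_tauHat_one hα hs
  rw [hsf] at hinv
  have hscaled := hpow.mul (hinv.comp x (hf.div hpow hpow_ne))
  rw [Function.comp_apply, Pi.div_apply, ← hsf, tauHat_one_profile hα hs] at hscaled
  refine (hscaled.congr_of_eventuallyEq ?_).congr_deriv ?_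
  · filter_upwards [lt_mem_nhds hx] with y hy
    rw [tauHat_eq_mul_tauHat_one hy, ← mul_assoc, ← Real.rpow_add_one hy.ne']
    rfl
  · have hderiv := (deriv_profile_pos hα hs).ne'
    rw [hsf]
    field_simp
    ring

lemma exists_hasDerivAt_rpow_mul_tauHat_le (hα : 0 < α) (hx : 0 < x) (hfx : 0 < f x)
    (hf : HasDerivAt f f' x) (hf'_nonneg : 0 ≤ f') (hf'_le : x * f' ≤ (α + 1) * f x) :
    ∃ D, HasDerivAt (fun y => y ^ α * tauHat α y (f y)) D x ∧
      0 ≤ D ∧ D ≤ (α + 1) * x ^ α * tauHat α 1 (f x / x ^ (α + 1)) := by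
  obtain ⟨s, hs, hsf⟩ := exists_pos_profile_eq hα (div_pos hfx (Real.rpow_pos_of_pos hx (α + 1)))
  have hderiv := deriv_profile_pos hα hs
  refine ⟨_, hasDerivAt_rpow_mul_tauHat hα hx hs hf hsf, ?_, ?_⟩
  · have : profile α s / deriv (profile α) s ≤ s :=
      div_le_of_le_mul₀ hderiv.le hs.le (profile_le_mul_deriv hα.le (by linarith))
    have : 0 ≤ s - profile α s / deriv (profile α) s := by linarith
    positivity
  · have hf'_le_profile : f' ≤ (α + 1) * x ^ α * profile α s := by
      rw [hsf, Real.rpow_add_one hx.ne']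
      field_simp
      linarith
    rw [← hsf, tauHat_one_profile hα hs]
    calc _ ≤ (α + 1) * x ^ α * (s - profile α s / deriv (profile α) s)
            + (α + 1) * x ^ α * profile α s / deriv (profile α) s := by gcongr
      _ = (α + 1) * x ^ α * s := by ring

lemma mul_tauHat_one_sq_le (hα : 1 ≤ α) (hz : 0 < z) : α * tauHat α 1 z ^ 2 ≤ z := by
  obtain ⟨s, hs, rfl⟩ := exists_pos_profile_eq (by linarith : 0 < α) hz
  rw [tauHat_one_profile (by linarith) hs]
  exact mul_sq_le_profile hα hs.le

end TauHat

section ZHat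

variable {α x h₁ h₂ : ℝ}

lemma zHat_pos (hα : 0 ≤ α) (hx : 0 ≤ x) (hxh : 0 < x + h₁) (hh₂ : h₂ ≠ 0) :
    0 < zHat α x h₁ h₂ := by
  have tangent := mul_rpow_sub_one_mul_sub_le_rpow_sub_rpow (by linarith : 1 ≤ α + 1) hxh hx
  rw [add_sub_cancel_right] at tangent
  have : ((x + h₁) ^ (α + 1) - x ^ (α + 1)) / (α + 1) ≤ h₁ * (x + h₁) ^ α := by
    rw [div_le_iff₀ (by linarith)]
    linarith
  have : 0 < h₂ ^ 2 * (x + h₁) ^ (α - 1) := by positivity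
  unfold zHat
  linarith

lemma zHat_le (hα : 1 ≤ α) (hx : 0 < x) (hh₁ : 0 ≤ h₁) :
    zHat α x h₁ h₂ ≤ (h₂ ^ 2 + α * h₁ ^ 2) * (x + h₁) ^ (α - 1) := by
  have tangent_left :=
    mul_rpow_sub_one_mul_sub_le_rpow_sub_rpow (by linarith : 1 ≤ α + 1) hx (add_nonneg hx.le hh₁)
  rw [add_sub_cancel_right, add_sub_cancel_left] at tangent_left
  have integral_ge : h₁ * x ^ α ≤ ((x + h₁) ^ (α + 1) - x ^ (α + 1)) / (α + 1) := by
    rw [le_div_iff₀ (by linarith)]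
    linarith
  have tangent_right :=
    mul_rpow_sub_one_mul_sub_le_rpow_sub_rpow hα (by linarith : 0 < x + h₁) hx.le
  have := mul_le_mul_of_nonneg_left tangent_right hh₁
  unfold zHat
  linarith

lemma hasDerivAt_zHat (hα : α + 1 ≠ 0) (hx : x ≠ 0) (hxh : x + h₁ ≠ 0) :
    HasDerivAt (fun y => zHat α y h₁ h₂)
      ((α - 1) * h₂ ^ 2 * (x + h₁) ^ (α - 2) +
        (α * h₁ * (x + h₁) ^ (α - 1) - ((x + h₁) ^ α - x ^ α))) x := by
  have shifted (p : ℝ) : HasDerivAt (fun y : ℝ => (y + h₁) ^ p) (p * (x + h₁) ^ (p - 1)) x := by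
    simpa only [id, one_mul] using
      ((hasDerivAt_id x).add_const h₁).rpow_const (p := p) (Or.inl hxh)
  have unshifted := Real.hasDerivAt_rpow_const (p := α + 1) (Or.inl hx)
  refine ((((shifted (α - 1)).const_mul (h₂ ^ 2)).add ((shifted α).const_mul h₁)).sub
    (((shifted (α + 1)).sub unshifted).div_const (α + 1))).congr_deriv ?_
  rw [show α - 1 - 1 = α - 2 by ring, add_sub_cancel_right]
  field_simp
  ring

lemma deriv_zHat_nonneg (hα : 1 ≤ α) (hx : 0 < x) (hxh : 0 < x + h₁) :
    0 ≤ deriv (fun y => zHat α y h₁ h₂) x := by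
  rw [(hasDerivAt_zHat (by linarith) hx.ne' hxh.ne').deriv]
  have tangent := mul_rpow_sub_one_mul_sub_le_rpow_sub_rpow hα hxh hx.le
  have : 0 ≤ (α - 1) * h₂ ^ 2 * (x + h₁) ^ (α - 2) := by
    have : 0 ≤ α - 1 := by linarith
    positivity
  linarith

lemma mul_deriv_zHat_le (hα : 0 ≤ α) (hx : 0 < x) (hh₁ : 0 ≤ h₁) :
    x * deriv (fun y => zHat α y h₁ h₂) x ≤ (α + 1) * zHat α x h₁ h₂ := by
  have hxh : 0 < x + h₁ := by linarith
  rw [(hasDerivAt_zHat (by linarith) hx.ne' hxh.ne').deriv]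
  -- Euler's identity: the right-hand side is `h₁ ∂ẑ′/∂h₁ + h₂ ∂ẑ′/∂h₂`.
  have euler : (α + 1) * zHat α x h₁ h₂ - x * ((α - 1) * h₂ ^ 2 * (x + h₁) ^ (α - 2) +
        (α * h₁ * (x + h₁) ^ (α - 1) - ((x + h₁) ^ α - x ^ α))) =
      (2 * x + (α + 1) * h₁) * h₂ ^ 2 * (x + h₁) ^ (α - 2) +
        α * h₁ ^ 2 * (x + h₁) ^ (α - 1) := by
    rw [zHat, Real.rpow_add_one hxh.ne', Real.rpow_add_one hx.ne', Real.rpow_sub_one hxh.ne',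
      Real.rpow_sub hxh, Real.rpow_two]
    field_simp
    ring
  have : 0 ≤ (2 * x + (α + 1) * h₁) * h₂ ^ 2 * (x + h₁) ^ (α - 2) +
      α * h₁ ^ 2 * (x + h₁) ^ (α - 1) := by positivity
  linarith

lemma zHat_div_rpow_le {ε : ℝ} (hα : 1 ≤ α) (hx : 0 < x) (hh₁ : 0 ≤ h₁) (hh₂ : 0 ≤ h₂)
    (hε : ε ≤ 1) (hh₁ε : h₁ ≤ ε * x) (hh₂ε : h₂ ≤ ε * x) :
    zHat α x h₁ h₂ / x ^ (α + 1) ≤ α * 2 ^ α * ε ^ 2 := by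
  have hh₁x : h₁ ≤ x := hh₁ε.trans (mul_le_of_le_one_left hx.le hε)
  have : 0 ≤ α - 1 := by linarith
  rw [div_le_iff₀ (by positivity)]
  calc zHat α x h₁ h₂ ≤ (h₂ ^ 2 + α * h₁ ^ 2) * (x + h₁) ^ (α - 1) := zHat_le hα hx hh₁
    _ ≤ (α * (ε * x) ^ 2 + α * (ε * x) ^ 2) * (2 * x) ^ (α - 1) := by
        have : h₂ ^ 2 ≤ α * (ε * x) ^ 2 :=
          (pow_le_pow_left₀ hh₂ hh₂ε 2).trans (le_mul_of_one_le_left (sq_nonneg _) hα)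
        gcongr
        linarith
    _ = α * 2 ^ α * ε ^ 2 * x ^ (α + 1) := by
        rw [Real.mul_rpow zero_le_two hx.le, Real.rpow_add_one hx.ne',
          Real.rpow_sub_one hx.ne', Real.rpow_sub_one two_ne_zero]
        field_simp
        ring

lemma tauHat_one_zHat_le {ε : ℝ} (hα : 1 ≤ α) (hx : 0 < x) (hh₁ : 0 ≤ h₁) (hh₂ : 0 < h₂)
    (hε : ε ≤ 1) (hh₁ε : h₁ ≤ ε * x) (hh₂ε : h₂ ≤ ε * x) :
    tauHat α 1 (zHat α x h₁ h₂ / x ^ (α + 1)) ≤ 2 ^ α * ε := by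
  have hε_nonneg : 0 ≤ ε := nonneg_of_mul_nonneg_left (hh₂.le.trans hh₂ε) hx
  have hz : 0 < zHat α x h₁ h₂ := zHat_pos (by linarith) hx.le (by positivity) hh₂.ne'
  have hsq := (mul_tauHat_one_sq_le hα (div_pos hz (Real.rpow_pos_of_pos hx (α + 1)))).trans
    (zHat_div_rpow_le hα hx hh₁ hh₂.le hε hh₁ε hh₂ε)
  rw [mul_assoc, mul_le_mul_iff_right₀ (by linarith)] at hsq
  refine le_of_sq_le_sq (hsq.trans ?_) (by positivity)
  rw [mul_pow]
  gcongr
  exact le_self_pow₀ (Real.one_le_rpow one_le_two (by linarith)) two_ne_zero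

end ZHat

/-- Lemma 6.2: the derivative of `x′ ↦ x′^α τ̂(x′,h)` is small compared with `x′^α` in
the noncharacteristic regime `x′ > max(h₁,h₂)/ε₀`. -/
theorem deriv_tauHat_small (α : ℝ) (hα : 1 ≤ α) :
    ∀ σ₀ : ℝ, 0 < σ₀ → ∃ ε₀ : ℝ, 0 < ε₀ ∧ ∀ h₁ h₂ : ℝ, 0 < h₁ → 0 < h₂ →
      ∀ x' : ℝ, max h₁ h₂ / ε₀ < x' →
        0 < zHat α x' h₁ h₂ ∧
        ∃ D : ℝ, HasDerivAt (fun x => x ^ α * tauHat α x (zHat α x h₁ h₂)) D x' ∧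
          |D| ≤ σ₀ * x' ^ α := by
  intro σ₀ hσ₀
  have hα_pos : 0 < α := by linarith
  set ε := min 1 (σ₀ / ((α + 1) * 2 ^ α))
  have hε_pos : 0 < ε := by positivity
  have hεσ₀ : (α + 1) * (2 ^ α * ε) ≤ σ₀ := by
    rw [← mul_assoc, mul_comm, ← le_div_iff₀ (by positivity)]
    exact min_le_right _ _
  refine ⟨ε, hε_pos, fun h₁ h₂ hh₁ hh₂ x hx_gt => ?_⟩
  have hx : 0 < x := (div_pos (lt_max_of_lt_left hh₁) hε_pos).trans hx_gt
  rw [div_lt_iff₀' hε_pos, max_lt_iff] at hx_gt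
  have hxh : 0 < x + h₁ := by linarith
  have hz : 0 < zHat α x h₁ h₂ := zHat_pos hα_pos.le hx.le hxh hh₂.ne'
  have hs := tauHat_one_zHat_le hα hx hh₁.le hh₂ (min_le_left _ _) hx_gt.1.le hx_gt.2.le
  obtain ⟨D, hD, hD_nonneg, hD_le⟩ := exists_hasDerivAt_rpow_mul_tauHat_le hα_pos hx hz
    (hasDerivAt_zHat (by linarith) hx.ne' hxh.ne').differentiableAt.hasDerivAt
    (deriv_zHat_nonneg hα hx hxh) (mul_deriv_zHat_le hα_pos.le hx hh₁.le)
  refine ⟨hz, D, hD, ?_⟩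
  calc |D| = D := abs_of_nonneg hD_nonneg
    _ ≤ (α + 1) * x ^ α * (2 ^ α * ε) := hD_le.trans (by gcongr)
    _ = (α + 1) * (2 ^ α * ε) * x ^ α := by ring
    _ ≤ σ₀ * x ^ α := by gcongr
end

section
/- Let α ≥ 1 and x′ > 0, and define φ(t) = ( (x′ + t)^{α+1} − x′^{α+1} ) / ( (α+1) (x′ + t)^α ) for t ≥ 0. Then φ is differentiable on (0,∞) and 1/(α+1) ≤ φ′(t) ≤ 1 for all t > 0; consequently φ(t)/t ∈ [1/(α+1), 1] for all t > 0, and φ is a strictly increasing bijection from [0,∞) onto [0,∞). -/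
/-- `φ(t) = ((x′+t)^{α+1} − x′^{α+1}) / ((α+1)(x′+t)^α)`. -/
noncomputable def phiFn (α x' t : ℝ) : ℝ :=
  ((x' + t) ^ (α + 1) - x' ^ (α + 1)) / ((α + 1) * (x' + t) ^ α)

/-!
Write `s = x' + t`. Then `φ(t) = (s - x' ^ (α + 1) * s ^ (-α)) / (α + 1)`, so that
`φ'(t) = (1 + α * (x' / s) ^ (α + 1)) / (α + 1)`. As `0 ≤ x' / s ≤ 1`, this lies between
`1 / (α + 1)` and `1`. Since `φ(0) = 0`, the mean value theorem carries these bounds over to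
`φ(t) / t`; the lower one forces strict monotonicity and `φ(t) → ∞`, hence bijectivity.
-/

open Set Filter Topology

theorem bijOn_Ici_of_strictMonoOn {X Y : Type*}
    [ConditionallyCompleteLinearOrder X] [DenselyOrdered X] [TopologicalSpace X] [OrderTopology X]
    [LinearOrder Y] [TopologicalSpace Y] [OrderClosedTopology Y] {f : X → Y} {a : X}
    (hmono : StrictMonoOn f (Ici a)) (hcont : ContinuousOn f (Ici a))
    (htop : Tendsto f atTop atTop) : BijOn f (Ici a) (Ici (f a)) :=
  ⟨fun _ hx => hmono.monotoneOn self_mem_Ici hx hx, hmono.injOn,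
    isPreconnected_Ici.intermediate_value_Ici self_mem_Ici
      (le_principal_iff.2 (Ici_mem_atTop a)) hcont htop⟩

theorem slope_mem_of_forall_deriv_mem {f : ℝ → ℝ} {s : Set ℝ} {a b : ℝ} (hab : a < b)
    (hcont : ContinuousOn f (Icc a b)) (hdiff : DifferentiableOn ℝ f (Ioo a b))
    (hderiv : ∀ x ∈ Ioo a b, deriv f x ∈ s) : slope f a b ∈ s := by
  obtain ⟨c, hc, hslope⟩ := exists_deriv_eq_slope f hab hcont hdiff
  rw [slope_def_field, ← hslope]
  exact hderiv c hc

theorem tendsto_atTop_of_eventually_le_slope {𝕜 : Type*} [Field 𝕜] [LinearOrder 𝕜]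
    [IsStrictOrderedRing 𝕜] {f : 𝕜 → 𝕜} {a m : 𝕜} (hm : 0 < m)
    (hslope : ∀ᶠ t in atTop, m ≤ slope f a t) : Tendsto f atTop atTop := by
  have hline : Tendsto (fun t => m * (t + -a) + f a) atTop atTop :=
    tendsto_atTop_add_const_right _ _
      ((tendsto_atTop_add_const_right _ (-a) tendsto_id).const_mul_atTop hm)
  refine tendsto_atTop_mono' _ ?_ hline
  filter_upwards [hslope, eventually_gt_atTop a] with t hle ht
  rwa [slope_def_field, le_div_iff₀ (sub_pos.2 ht), le_sub_iff_add_le, sub_eq_add_neg] at hle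

section PhiFn

variable {α x' t : ℝ}

theorem phiFn_zero_right (α x' : ℝ) : phiFn α x' 0 = 0 := by
  simp [phiFn]

theorem phiFn_eq_sub_mul_rpow_neg (hs : 0 < x' + t) :
    phiFn α x' t = ((x' + t) - x' ^ (α + 1) * (x' + t) ^ (-α)) / (α + 1) := by
  have hpow : (x' + t) ^ α ≠ 0 := (Real.rpow_pos_of_pos hs α).ne'
  rw [phiFn, Real.rpow_neg hs.le, Real.rpow_add_one hs.ne']
  field_simp

theorem hasDerivAt_phiFn (hx : 0 ≤ x') (hs : 0 < x' + t) :
    HasDerivAt (phiFn α x') ((1 + α * (x' / (x' + t)) ^ (α + 1)) / (α + 1)) t := by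
  have heq : phiFn α x' =ᶠ[𝓝 t]
      fun u => ((x' + u) - x' ^ (α + 1) * (x' + u) ^ (-α)) / (α + 1) := by
    filter_upwards [lt_mem_nhds (neg_lt_iff_pos_add'.2 hs)] with u hu
    exact phiFn_eq_sub_mul_rpow_neg (neg_lt_iff_pos_add'.1 hu)
  have hshift : HasDerivAt (fun u => x' + u) 1 t := (hasDerivAt_id t).const_add x'
  have hpow := hshift.rpow_const (p := -α) (Or.inl hs.ne')
  refine (((hshift.sub (hpow.const_mul (x' ^ (α + 1)))).div_const (α + 1)).congr_deriv
    ?_).congr_of_eventuallyEq heq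
  rw [Real.div_rpow hx hs.le, ← neg_add', Real.rpow_neg hs.le]
  ring

theorem deriv_phiFn_mem_Icc (hα : 0 ≤ α) (hx : 0 < x') (ht : 0 ≤ t) :
    deriv (phiFn α x') t ∈ Icc (1 / (α + 1)) 1 := by
  have hs : 0 < x' + t := by positivity
  have hratio : (x' / (x' + t)) ^ (α + 1) ≤ 1 :=
    Real.rpow_le_one (by positivity) ((div_le_one hs).2 (by linarith)) (by positivity)
  rw [(hasDerivAt_phiFn hx.le hs).deriv]
  constructor
  · gcongr
    exact le_add_of_nonneg_right (by positivity)
  · rw [div_le_one (by positivity)]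
    linarith [mul_le_of_le_one_right hα hratio]

theorem differentiableAt_phiFn (hx : 0 < x') (ht : 0 ≤ t) :
    DifferentiableAt ℝ (phiFn α x') t :=
  (hasDerivAt_phiFn hx.le (by positivity)).differentiableAt

theorem continuousOn_phiFn (hx : 0 < x') : ContinuousOn (phiFn α x') (Ici 0) :=
  fun _ ht => (differentiableAt_phiFn hx ht).continuousAt.continuousWithinAt

theorem slope_phiFn_mem_Icc (hα : 0 ≤ α) (hx : 0 < x') (ht : 0 < t) :
    slope (phiFn α x') 0 t ∈ Icc (1 / (α + 1)) 1 :=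
  slope_mem_of_forall_deriv_mem ht ((continuousOn_phiFn hx).mono Icc_subset_Ici_self)
    (fun _ hu => (differentiableAt_phiFn hx hu.1.le).differentiableWithinAt)
    fun _ hu => deriv_phiFn_mem_Icc hα hx hu.1.le

theorem phiFn_div_mem_Icc (hα : 0 ≤ α) (hx : 0 < x') (ht : 0 < t) :
    phiFn α x' t / t ∈ Icc (1 / (α + 1)) 1 := by
  simpa only [slope_def_field, phiFn_zero_right, sub_zero] using slope_phiFn_mem_Icc hα hx ht

theorem strictMonoOn_phiFn (hα : 0 ≤ α) (hx : 0 < x') :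
    StrictMonoOn (phiFn α x') (Ici 0) := by
  refine strictMonoOn_of_deriv_pos (convex_Ici 0) (continuousOn_phiFn hx) fun t ht => ?_
  have hinv : 0 < 1 / (α + 1) := by positivity
  exact hinv.trans_le (deriv_phiFn_mem_Icc hα hx (interior_subset ht)).1

theorem tendsto_phiFn_atTop (hα : 0 ≤ α) (hx : 0 < x') :
    Tendsto (phiFn α x') atTop atTop :=
  tendsto_atTop_of_eventually_le_slope (a := 0) (m := 1 / (α + 1)) (by positivity) <|
    (eventually_gt_atTop 0).mono fun _ ht => (slope_phiFn_mem_Icc hα hx ht).1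

theorem bijOn_phiFn (hα : 0 ≤ α) (hx : 0 < x') : BijOn (phiFn α x') (Ici 0) (Ici 0) := by
  simpa only [phiFn_zero_right] using bijOn_Ici_of_strictMonoOn (strictMonoOn_phiFn hα hx)
    (continuousOn_phiFn hx) (tendsto_phiFn_atTop hα hx)

end PhiFn

theorem phiFn_properties_general (α x' : ℝ) (hα : 0 ≤ α) (hx : 0 < x') :
    (∀ t : ℝ, 0 < t → ∃ D : ℝ, HasDerivAt (fun u => phiFn α x' u) D t ∧
        1 / (α + 1) ≤ D ∧ D ≤ 1) ∧
      (∀ t : ℝ, 0 < t → 1 / (α + 1) ≤ phiFn α x' t / t ∧ phiFn α x' t / t ≤ 1) ∧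
      StrictMonoOn (phiFn α x') (Set.Ici 0) ∧
      Set.BijOn (phiFn α x') (Set.Ici 0) (Set.Ici 0) :=
  ⟨fun t ht => ⟨deriv (phiFn α x') t, (differentiableAt_phiFn hx ht.le).hasDerivAt,
      deriv_phiFn_mem_Icc hα hx ht.le⟩,
    fun _ ht => phiFn_div_mem_Icc hα hx ht, strictMonoOn_phiFn hα hx, bijOn_phiFn hα hx⟩

/-- Properties of `φ`: its derivative lies in `[1/(α+1), 1]` on `(0,∞)`, consequently
`φ(t)/t ∈ [1/(α+1), 1]`, and `φ` is a strictly increasing bijection of `[0,∞)` onto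
itself. -/
theorem phiFn_properties (α x' : ℝ) (hα : 1 ≤ α) (hx : 0 < x') :
    (∀ t : ℝ, 0 < t → ∃ D : ℝ, HasDerivAt (fun u => phiFn α x' u) D t ∧
        1 / (α + 1) ≤ D ∧ D ≤ 1) ∧
      (∀ t : ℝ, 0 < t → 1 / (α + 1) ≤ phiFn α x' t / t ∧ phiFn α x' t / t ≤ 1) ∧
      StrictMonoOn (phiFn α x') (Set.Ici 0) ∧
      Set.BijOn (phiFn α x') (Set.Ici 0) (Set.Ici 0) :=
  phiFn_properties_general α x' (zero_le_one.trans hα) hx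
end
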